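/- arXiv:1808.06371 — 2 statements merged into one kernel-verified Lean document; each statement's English description precedes it below -/
import Mathlib

section
/- Let G be a finitely generated virtually abelian group and let S be a finite set generating G as a monoid with weight function ω : S → ℕ₊. Define the weight of a conjugacy class c of G to be ω(c) = min{ω(x) : x ∈ c}. Then the weighted conjugacy growth series of G, namely ∑_{n≥0} #{conjugacy classes c of G : ω(c) = n} zⁿ, is a rational power series. -/
/-- The weight of a group element `g` with respect to a generating set `S` and a
weight function `ω`: the minimal total weight among all words over `S` representing `g`. -/
noncomputable def wordWeight {G : Type*} [Group G] (S : Set G) (ω : G → ℕ) (g : G) : ℕ :=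
  sInf {n | ∃ l : List G, (∀ x ∈ l, x ∈ S) ∧ l.prod = g ∧ (l.map ω).sum = n}

/-- The weight of a conjugacy class: the minimal weight of an element of the class. -/
noncomputable def conjClassWeight {G : Type*} [Group G] (S : Set G) (ω : G → ℕ)
    (c : ConjClasses G) : ℕ :=
  sInf {n | ∃ g : G, ConjClasses.mk g = c ∧ wordWeight S ω g = n}

/-- A formal power series with integer coefficients is rational if it is the quotient
of two integer polynomials. -/
def IsRationalSeries (f : PowerSeries ℤ) : Prop :=
  ∃ p q : Polynomial ℤ, q ≠ 0 ∧ f * (q : PowerSeries ℤ) = (p : PowerSeries ℤ)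


namespace VAConj

open Polynomial

theorem _root_.IsRationalSeries.zero : IsRationalSeries 0 := ⟨0, 1, one_ne_zero, by simp⟩

theorem _root_.IsRationalSeries.poly (p : Polynomial ℤ) : IsRationalSeries (p : PowerSeries ℤ) :=
  ⟨p, 1, one_ne_zero, by simp⟩

theorem _root_.IsRationalSeries.add {f g : PowerSeries ℤ} (hf : IsRationalSeries f)
    (hg : IsRationalSeries g) : IsRationalSeries (f + g) := by
  obtain ⟨p, q, hq, h⟩ := hf
  obtain ⟨p', q', hq', h'⟩ := hg
  refine ⟨p * q' + p' * q, q * q', mul_ne_zero hq hq', ?_⟩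
  push_cast
  rw [← h, ← h']
  ring

theorem _root_.IsRationalSeries.polyMul {f : PowerSeries ℤ} (hf : IsRationalSeries f)
    (r : Polynomial ℤ) : IsRationalSeries ((r : PowerSeries ℤ) * f) := by
  obtain ⟨p, q, hq, h⟩ := hf
  refine ⟨r * p, q, hq, ?_⟩
  push_cast
  rw [← h]
  ring

theorem _root_.IsRationalSeries.neg {f : PowerSeries ℤ} (hf : IsRationalSeries f) :
    IsRationalSeries (-f) := by
  have := IsRationalSeries.polyMul hf (-1)
  simpa using this

theorem _root_.IsRationalSeries.of_polyMul {f : PowerSeries ℤ} (r : Polynomial ℤ) (hr : r ≠ 0)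
    (hf : IsRationalSeries ((r : PowerSeries ℤ) * f)) : IsRationalSeries f := by
  obtain ⟨p, q, hq, h⟩ := hf
  refine ⟨p, r * q, mul_ne_zero hr hq, ?_⟩
  rw [← h]
  push_cast
  ring

section Counting

variable {α β : Type*}

/-- generating series counting the elements of `A` by weight -/
noncomputable def cnt (w : α → ℕ) (A : Set α) : PowerSeries ℤ :=
  PowerSeries.mk fun k => ((A ∩ w ⁻¹' {k}).ncard : ℤ)

/-- `A` has finite fibres for the weight `w` and a rational counting series -/
def RatSet (w : α → ℕ) (A : Set α) : Prop :=
  (∀ k, (A ∩ w ⁻¹' {k}).Finite) ∧ IsRationalSeries (cnt w A)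

theorem RatSet.empty (w : α → ℕ) : RatSet w ∅ := by
  refine ⟨by simp, ?_⟩
  convert IsRationalSeries.zero
  ext k
  simp [cnt]

theorem cnt_union_add_inter {w : α → ℕ} {A B : Set α} (hA : ∀ k, (A ∩ w ⁻¹' {k}).Finite)
    (hB : ∀ k, (B ∩ w ⁻¹' {k}).Finite) :
    cnt w (A ∪ B) + cnt w (A ∩ B) = cnt w A + cnt w B := by
  ext k
  have := Set.ncard_union_add_ncard_inter (A ∩ w ⁻¹' {k}) (B ∩ w ⁻¹' {k}) (hA k) (hB k)
  rw [← Set.union_inter_distrib_right, ← Set.inter_inter_distrib_right] at this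
  simp only [cnt, map_add, PowerSeries.coeff_mk]
  exact_mod_cast this

theorem RatSet.union {w : α → ℕ} {A B : Set α} (hA : RatSet w A) (hB : RatSet w B)
    (hAB : RatSet w (A ∩ B)) : RatSet w (A ∪ B) := by
  refine ⟨fun k => ?_, ?_⟩
  · rw [Set.union_inter_distrib_right]
    exact (hA.1 k).union (hB.1 k)
  · have h : cnt w (A ∪ B) = cnt w A + cnt w B + -cnt w (A ∩ B) := by
      rw [← cnt_union_add_inter hA.1 hB.1]; ring
    rw [h]
    exact (hA.2.add hB.2).add hAB.2.neg

theorem RatSet.disjUnion {w : α → ℕ} {A B : Set α} (hA : RatSet w A) (hB : RatSet w B)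
    (hAB : Disjoint A B) : RatSet w (A ∪ B) := by
  refine hA.union hB ?_
  rw [Set.disjoint_iff_inter_eq_empty.1 hAB]
  exact RatSet.empty w

theorem RatSet.sdiff {w : α → ℕ} {A B : Set α} (hA : RatSet w A) (hB : RatSet w B)
    (hBA : B ⊆ A) : RatSet w (A \ B) := by
  have hf : ∀ k, ((A \ B) ∩ w ⁻¹' {k}).Finite := fun k =>
    (hA.1 k).subset (Set.inter_subset_inter_left _ Set.sdiff_subset)
  refine ⟨hf, ?_⟩
  have h := cnt_union_add_inter hf hB.1
  have h0 : cnt w (∅ : Set α) = 0 := by ext k; simp [cnt]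
  rw [Set.sdiff_union_of_subset hBA, Set.sdiff_inter_self, h0, add_zero] at h
  have h' : cnt w (A \ B) = cnt w A + -cnt w B := by rw [h]; ring
  rw [h']
  exact hA.2.add hB.2.neg

theorem cnt_image {w : α → ℕ} {w' : β → ℕ} {A : Set α} (g : α → β) (hg : Set.InjOn g A) (d : ℕ)
    (hd : ∀ x ∈ A, w' (g x) = w x + d) :
    cnt w' (g '' A) = ((X ^ d : Polynomial ℤ) : PowerSeries ℤ) * cnt w A := by
  ext k
  rw [Polynomial.coe_pow, Polynomial.coe_X, PowerSeries.coeff_X_pow_mul']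
  simp only [cnt, PowerSeries.coeff_mk]
  split_ifs with h
  · congr 1
    have : g '' A ∩ w' ⁻¹' {k} = g '' (A ∩ w ⁻¹' {k - d}) := by
      ext y
      constructor
      · rintro ⟨⟨x, hx, rfl⟩, hk⟩
        refine ⟨x, ⟨hx, ?_⟩, rfl⟩
        have := hd x hx
        simp at hk ⊢
        omega
      · rintro ⟨x, ⟨hx, hk⟩, rfl⟩
        refine ⟨⟨x, hx, rfl⟩, ?_⟩
        have := hd x hx
        simp at hk ⊢
        omega
    rw [this, (hg.mono Set.inter_subset_left).ncard_image]
  · have : g '' A ∩ w' ⁻¹' {k} = ∅ := by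
      ext y
      simp only [Set.mem_inter_iff, Set.mem_image, Set.mem_preimage, Set.mem_singleton_iff,
        Set.mem_empty_iff_false, iff_false, not_and]
      rintro ⟨x, hx, rfl⟩ hk
      have := hd x hx
      omega
    simp [this]

theorem finite_image_fib {w : α → ℕ} {w' : β → ℕ} {A : Set α} (g : α → β) (d : ℕ)
    (hd : ∀ x ∈ A, w' (g x) = w x + d) (k : ℕ) (h : (A ∩ w ⁻¹' {k - d}).Finite) :
    (g '' A ∩ w' ⁻¹' {k}).Finite := by
  refine (h.image g).subset ?_
  rintro y ⟨⟨x, hx, rfl⟩, hk⟩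
  refine ⟨x, ⟨hx, ?_⟩, rfl⟩
  have := hd x hx
  simp at hk ⊢
  omega

theorem RatSet.image {w : α → ℕ} {w' : β → ℕ} {A : Set α} (h : RatSet w A) (g : α → β)
    (hg : Set.InjOn g A) (d : ℕ) (hd : ∀ x ∈ A, w' (g x) = w x + d) : RatSet w' (g '' A) := by
  refine ⟨fun k => finite_image_fib g d hd k (h.1 _), ?_⟩
  rw [cnt_image g hg d hd]
  exact h.2.polyMul _

theorem RatSet.of_translate {w : α → ℕ} {A : Set α} (g : α → α) (hg : Set.InjOn g A)
    (hmaps : g '' A ⊆ A) (d : ℕ) (hd0 : 0 < d) (hd : ∀ x ∈ A, w (g x) = w x + d)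
    (h : RatSet w (A \ g '' A)) : RatSet w A := by
  have hf : ∀ k, (A ∩ w ⁻¹' {k}).Finite := by
    intro k
    induction k using Nat.strong_induction_on with
    | _ k ih =>
      by_cases hk : d ≤ k
      · refine ((h.1 k).union (finite_image_fib g d hd k (ih (k - d) (by omega)))).subset ?_
        rintro x ⟨hx, hxk⟩
        by_cases hxg : x ∈ g '' A
        · exact Or.inr ⟨hxg, hxk⟩
        · exact Or.inl ⟨⟨hx, hxg⟩, hxk⟩
      · refine (h.1 k).subset ?_
        rintro x ⟨hx, hxk⟩
        refine ⟨⟨hx, ?_⟩, hxk⟩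
        rintro ⟨y, hy, rfl⟩
        have := hd y hy
        simp at hxk
        omega
  refine ⟨hf, ?_⟩
  have h2 := cnt_union_add_inter h.1 (fun k => finite_image_fib g d hd k (hf _))
  have h0 : cnt w (∅ : Set α) = 0 := by ext k; simp [cnt]
  rw [Set.sdiff_union_of_subset hmaps, Set.sdiff_inter_self, h0, add_zero, cnt_image g hg d hd]
    at h2
  refine IsRationalSeries.of_polyMul (1 - X ^ d) ?_ ?_
  · intro h3
    have := congrArg (fun p => Polynomial.coeff p 0) h3
    simp [Polynomial.coeff_X_pow, hd0.ne] at this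
  · convert h.2 using 1
    push_cast at h2 ⊢
    rw [sub_mul, one_mul]
    nth_rewrite 1 [h2]
    ring

theorem RatSet.singleton (w : α → ℕ) (a : α) : RatSet w {a} := by
  refine ⟨fun k => (Set.finite_singleton a).subset Set.inter_subset_left, ?_⟩
  convert IsRationalSeries.poly (X ^ (w a)) using 1
  ext k
  simp only [cnt, PowerSeries.coeff_mk, Polynomial.coe_pow, Polynomial.coe_X,
    PowerSeries.coeff_X_pow]
  split_ifs with h
  · have : ({a} : Set α) ∩ w ⁻¹' {k} = {a} := by
      ext x; simp; rintro rfl; exact h.symm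
    simp [this]
  · have : ({a} : Set α) ∩ w ⁻¹' {k} = ∅ := by
      ext x; simp; rintro rfl; exact fun h' => h h'.symm
    simp [this]

theorem RatSet.iUnion_list {w : α → ℕ} (𝒢 : Set (Set α)) (hG : ∀ A ∈ 𝒢, RatSet w A)
    (hi : ∀ A ∈ 𝒢, ∀ B ∈ 𝒢, A ∩ B ∈ 𝒢) (n : ℕ) :
    ∀ l : List (Set α), l.length = n → (∀ A ∈ l, A ∈ 𝒢) → RatSet w {x | ∃ A ∈ l, x ∈ A} := by
  induction n with
  | zero =>
    intro l hl _
    rw [List.length_eq_zero_iff] at hl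
    subst hl
    simpa using RatSet.empty w
  | succ n ih =>
    intro l hl hlG
    match l, hl with
    | A :: l, hl =>
      have hl' : l.length = n := by simpa using hl
      have hA : A ∈ 𝒢 := hlG A (by simp)
      have hr : ∀ B ∈ l, B ∈ 𝒢 := fun B hB => hlG B (by simp [hB])
      have e : {x | ∃ B ∈ A :: l, x ∈ B} = A ∪ {x | ∃ B ∈ l, x ∈ B} := by
        ext x; simp
      rw [e]
      refine (hG A hA).union (ih l hl' hr) ?_
      have e2 : A ∩ {x | ∃ B ∈ l, x ∈ B} = {x | ∃ B ∈ l.map (fun B => A ∩ B), x ∈ B} := by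
        ext x; simp; tauto
      rw [e2]
      refine ih _ (by simpa using hl') ?_
      intro B hB
      obtain ⟨C, hC, rfl⟩ := List.mem_map.1 hB
      exact hi _ hA _ (hr C hC)

theorem RatSet.sUnion {w : α → ℕ} (𝒢 : Set (Set α)) (hG : ∀ A ∈ 𝒢, RatSet w A)
    (hi : ∀ A ∈ 𝒢, ∀ B ∈ 𝒢, A ∩ B ∈ 𝒢) (F : Set (Set α)) (hF : F.Finite) (hFG : F ⊆ 𝒢) :
    RatSet w (⋃₀ F) := by
  have := RatSet.iUnion_list 𝒢 hG hi _ hF.toFinset.toList rfl (fun A hA => hFG (by simpa using hA))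
  convert this using 1
  ext x
  simp

theorem RatSet.biUnion_disjoint {ι : Type*} {w : α → ℕ} (s : Finset ι) (A : ι → Set α)
    (hA : ∀ i ∈ s, RatSet w (A i)) (hd : (s : Set ι).PairwiseDisjoint A) :
    RatSet w (⋃ i ∈ s, A i) := by
  classical
  induction s using Finset.induction_on with
  | empty => simpa using RatSet.empty w
  | insert a s ha ih =>
    rw [Finset.set_biUnion_insert]
    refine (hA a (by simp)).disjUnion
      (ih (fun i hi => hA i (by simp [hi])) (hd.subset (by simp))) ?_
    rw [Set.disjoint_iUnion₂_right]
    intro i hi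
    exact hd (by simp) (by simp [hi]) (by rintro rfl; exact ha hi)

end Counting

theorem exists_finite_basis {α : Type*} [PartialOrder α] [WellQuasiOrderedLE α] (D : Set α) :
    ∃ m : Set α, m.Finite ∧ m ⊆ D ∧ ∀ x ∈ D, ∃ y ∈ m, y ≤ x := by
  refine ⟨{x | Minimal (· ∈ D) x}, ?_, fun x hx => hx.1, fun x hx => ?_⟩
  · exact WellQuasiOrderedLE.finite_of_isAntichain (setOfPred_minimal_antichain _)
  · obtain ⟨y, hy, hm⟩ := exists_minimal_le_of_wellFoundedLT (· ∈ D) x hx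
    exact ⟨y, hm, hy⟩

theorem ratSet_cone_aux {r : ℕ} (w : (Fin r → ℕ) →+ ℕ) (hw : ∀ j, 0 < w (Pi.single j 1))
    (m : Fin r → ℕ) (T : Finset (Fin r)) :
    RatSet w {c | m ≤ c ∧ ∀ j ∉ T, c j = m j} := by
  induction T using Finset.induction_on with
  | empty =>
    convert RatSet.singleton w m using 1
    ext c
    constructor
    · rintro ⟨_, h⟩
      exact funext fun j => h j (by simp)
    · rintro rfl
      exact ⟨le_refl _, fun _ _ => rfl⟩
  | insert j T hj ih =>
    refine RatSet.of_translate (fun c => c + Pi.single j 1) ?_ ?_ (w (Pi.single j 1)) (hw j)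
      (fun x _ => map_add w _ _) ?_
    · intro a _ b _ h
      exact add_right_cancel h
    · rintro _ ⟨c, ⟨h1, h2⟩, rfl⟩
      refine ⟨h1.trans (by simp), fun i hi => ?_⟩
      have : i ≠ j := by rintro rfl; simp at hi
      simp [this, h2 i hi]
    · convert ih using 1
      ext c
      constructor
      · rintro ⟨⟨h1, h2⟩, h3⟩
        refine ⟨h1, fun i hi => ?_⟩
        by_cases hij : i = j
        · subst hij
          by_contra hne
          apply h3
          have hlt : m i < c i := lt_of_le_of_ne (h1 i) (Ne.symm hne)
          refine ⟨c - Pi.single i 1, ⟨?_, ?_⟩, ?_⟩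
          · intro l
            by_cases hl : l = i
            · subst hl; simp; omega
            · simpa [hl] using h1 l
          · intro l hl
            have : l ≠ i := by rintro rfl; simp at hl
            simpa [this] using h2 l hl
          · funext l
            by_cases hl : l = i
            · subst hl; simp; omega
            · simp [hl]
        · exact h2 i (by simp [hij, hi])
      · rintro ⟨h1, h2⟩
        refine ⟨⟨h1, fun i hi => h2 i (by simp at hi; tauto)⟩, ?_⟩
        rintro ⟨d, ⟨h3, h4⟩, rfl⟩
        have e1 : d j + (Pi.single j 1 : Fin r → ℕ) j = m j := h2 j hj
        have e2 : m j ≤ d j := h3 j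
        rw [Pi.single_eq_same] at e1
        omega

theorem ratSet_Ici {r : ℕ} (w : (Fin r → ℕ) →+ ℕ) (hw : ∀ j, 0 < w (Pi.single j 1))
    (m : Fin r → ℕ) : RatSet w (Set.Ici m) := by
  convert ratSet_cone_aux w hw m Finset.univ using 1
  ext c
  simp

theorem ratSet_upper {r : ℕ} (w : (Fin r → ℕ) →+ ℕ) (hw : ∀ j, 0 < w (Pi.single j 1))
    (D : Set (Fin r → ℕ)) (hD : IsUpperSet D) : RatSet w D := by
  obtain ⟨m, hm, hmD, hb⟩ := exists_finite_basis D
  have e : D = ⋃₀ (Set.Ici '' m) := by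
    ext x
    constructor
    · intro hx
      obtain ⟨y, hy, hyx⟩ := hb x hx
      exact ⟨_, ⟨y, hy, rfl⟩, hyx⟩
    · rintro ⟨_, ⟨y, hy, rfl⟩, hyx⟩
      exact hD hyx (hmD hy)
  rw [e]
  refine RatSet.sUnion (Set.range Set.Ici) ?_ ?_ _ (hm.image _) (Set.image_subset_range _ _)
  · rintro _ ⟨m, rfl⟩
    exact ratSet_Ici w hw m
  · rintro _ ⟨a, rfl⟩ _ ⟨b, rfl⟩
    exact ⟨a ⊔ b, Set.Ici_inter_Ici.symm⟩

theorem ratSet_lower {r : ℕ} (w : (Fin r → ℕ) →+ ℕ) (hw : ∀ j, 0 < w (Pi.single j 1))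
    (D : Set (Fin r → ℕ)) (hD : IsUpperSet D) : RatSet w Dᶜ := by
  rw [Set.compl_eq_univ_sdiff]
  refine RatSet.sdiff ?_ (ratSet_upper w hw D hD) (Set.subset_univ _)
  exact ratSet_upper w hw _ isUpperSet_univ

section Good

variable {M : Type*} [AddCancelCommMonoid M]

open Pointwise

/-- finite unions of translates of one finitely generated submonoid on which the weight is
positive outside zero -/
def Good (w : M →+ ℕ) (s : Set M) : Prop :=
  ∃ (F : Finset M) (P : AddSubmonoid M), P.FG ∧ (∀ x ∈ P, w x = 0 → x = 0) ∧
    s = {x | ∃ f ∈ F, ∃ p ∈ P, x = f + p}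

theorem exists_hom_pos (w : M →+ ℕ) (P : AddSubmonoid M) (hP : P.FG)
    (hw : ∀ x ∈ P, w x = 0 → x = 0) :
    ∃ (r : ℕ) (φ : (Fin r → ℕ) →+ M), AddMonoidHom.mrange φ = P ∧
      ∀ j, 0 < w (φ (Pi.single j 1)) := by
  classical
  obtain ⟨t, rfl⟩ := hP
  let t' := t.filter (· ≠ 0)
  let e := t'.equivFin
  let b : Fin t'.card → M := fun j => (e.symm j : M)
  have hb : ∀ j, b j ∈ t' := fun j => (e.symm j).2
  refine ⟨t'.card, (Fintype.linearCombination ℕ b).toAddMonoidHom, ?_, ?_⟩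
  · apply le_antisymm
    · rintro _ ⟨c, rfl⟩
      simp only [LinearMap.toAddMonoidHom_coe, Fintype.linearCombination_apply]
      refine AddSubmonoid.sum_mem _ fun j _ => AddSubmonoid.nsmul_mem _ ?_ _
      exact AddSubmonoid.subset_closure (Finset.mem_filter.1 (hb j)).1
    · rw [AddSubmonoid.closure_le]
      intro x hx
      by_cases hx0 : x = 0
      · subst hx0; exact AddSubmonoid.zero_mem _
      · have hx' : x ∈ t' := Finset.mem_filter.2 ⟨hx, hx0⟩
        refine ⟨Pi.single (e ⟨x, hx'⟩) 1, ?_⟩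
        simp [Fintype.linearCombination_apply_single, b]
  · intro j
    simp only [LinearMap.toAddMonoidHom_coe, Fintype.linearCombination_apply_single, one_smul]
    have h := Finset.mem_filter.1 (hb j)
    exact Nat.pos_of_ne_zero fun h0 => h.2 (hw _ (AddSubmonoid.subset_closure h.1) h0)

theorem Good.ratSet {w : M →+ ℕ} {s : Set M} (h : Good w s) : RatSet w s := by
  classical
  obtain ⟨F, P, hP, hw, rfl⟩ := h
  obtain ⟨r, φ, rfl, hpos⟩ := exists_hom_pos w P hP hw
  let D : M → Set (Fin r → ℕ) := fun f =>
    {c | ∃ f' ∈ F, ∃ c', toLex c' < toLex c ∧ f' + φ c' = f + φ c}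
  have hD : ∀ f, IsUpperSet (D f) := by
    rintro f a b hab ⟨f', hf', c', hlt, he⟩
    obtain ⟨d, rfl⟩ := exists_add_of_le hab
    refine ⟨f', hf', c' + d, ?_, ?_⟩
    · rw [toLex_add, toLex_add]
      exact add_lt_add_left hlt _
    · rw [map_add, map_add, ← add_assoc, he, add_assoc]
  have e : {x | ∃ f ∈ F, ∃ p ∈ AddMonoidHom.mrange φ, x = f + p} =
      ⋃ f ∈ F, (fun c => f + φ c) '' (D f)ᶜ := by
    ext x
    simp only [Set.mem_iUnion, Set.mem_image, exists_prop]
    constructor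
    · rintro ⟨f, hf, _, ⟨c, rfl⟩, rfl⟩
      let Z : Set (Lex (Fin r → ℕ)) := {c' | ∃ f' ∈ F, f' + φ (ofLex c') = f + φ c}
      have hZ : Z.Nonempty := ⟨toLex c, f, hf, rfl⟩
      obtain ⟨c0, ⟨f0, hf0, h0⟩, hmin⟩ := WellFounded.has_min (wellFounded_lt) Z hZ
      refine ⟨f0, hf0, ofLex c0, ?_, h0⟩
      rintro ⟨f', hf', c', hlt, he⟩
      exact hmin (toLex c') ⟨f', hf', he.trans h0⟩ hlt
    · rintro ⟨f, hf, c, _, rfl⟩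
      exact ⟨f, hf, _, ⟨c, rfl⟩, rfl⟩
  have key : ∀ f ∈ F, ∀ f' ∈ F, ∀ c ∈ (D f)ᶜ, ∀ c' ∈ (D f')ᶜ, f + φ c = f' + φ c' → c = c' := by
    intro f hf f' hf' c hc c' hc' he
    have h1 : ¬ toLex c' < toLex c := fun hlt => hc ⟨f', hf', c', hlt, he.symm⟩
    have h2 : ¬ toLex c < toLex c' := fun hlt => hc' ⟨f, hf, c, hlt, he⟩
    exact toLex.injective (le_antisymm (not_lt.1 h1) (not_lt.1 h2))
  rw [e]
  refine RatSet.biUnion_disjoint F _ ?_ ?_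
  · intro f hf
    refine (ratSet_lower (w.comp φ) hpos (D f) (hD f)).image _ ?_ (w f) ?_
    · intro a ha b hb hab
      exact key f hf f hf a ha b hb hab
    · intro c _
      simp [add_comm]
  · intro f hf f' hf' hne
    rw [Function.onFun, Set.disjoint_left]
    rintro _ ⟨c, hc, rfl⟩ ⟨c', hc', he⟩
    have := key f hf f' hf' c hc c' hc' he.symm
    subst this
    exact hne (add_right_cancel he).symm

theorem Good.inter {w : M →+ ℕ} {s s' : Set M} (h : Good w s) (h' : Good w s') :
    Good w (s ∩ s') := by
  classical
  obtain ⟨F, P, hP, hw, rfl⟩ := h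
  obtain ⟨F', P', hP', hw', rfl⟩ := h'
  obtain ⟨r, φ, rfl, -⟩ := exists_hom_pos w P hP hw
  obtain ⟨r', φ', rfl, -⟩ := exists_hom_pos w P' hP' hw'
  let a : (Fin r → ℕ) × (Fin r' → ℕ) →+ M := φ.comp (AddMonoidHom.fst _ _)
  let b : (Fin r → ℕ) × (Fin r' → ℕ) →+ M := φ'.comp (AddMonoidHom.snd _ _)
  let E := a.eqLocusM b
  have hE : E.FG := AddSubmonoid.fg_eqLocusM a b
  have hb : ∀ f f' : M, ∃ m : Set ((Fin r → ℕ) × (Fin r' → ℕ)), m.Finite ∧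
      m ⊆ {c | f + φ c.1 = f' + φ' c.2} ∧
      ∀ x ∈ {c : (Fin r → ℕ) × (Fin r' → ℕ) | f + φ c.1 = f' + φ' c.2}, ∃ y ∈ m, y ≤ x :=
    fun f f' => exists_finite_basis _
  choose m hm hmD hmb using hb
  refine ⟨F.biUnion fun f => F'.biUnion fun f' => (hm f f').toFinset.image fun c => f + φ c.1,
    E.map a, hE.map a, ?_, ?_⟩
  · rintro _ ⟨c, _, rfl⟩ h0
    exact hw _ ⟨c.1, rfl⟩ h0
  · ext x
    simp only [Finset.mem_biUnion, Finset.mem_image, Set.Finite.mem_toFinset]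
    constructor
    · rintro ⟨⟨f, hf, _, ⟨c, rfl⟩, rfl⟩, ⟨f', hf', _, ⟨c', rfl⟩, he⟩⟩
      obtain ⟨y, hy, hyx⟩ := hmb f f' (c, c') he
      obtain ⟨d, hd⟩ := exists_add_of_le hyx
      have hd1 : c = y.1 + d.1 := congrArg Prod.fst hd
      have hd2 : c' = y.2 + d.2 := congrArg Prod.snd hd
      have hy' : f + φ y.1 = f' + φ' y.2 := hmD f f' hy
      refine ⟨f + φ y.1, ⟨f, hf, f', hf', y, hy, rfl⟩, a d, ⟨d, ?_, rfl⟩, ?_⟩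
      · change φ d.1 = φ' d.2
        rw [hd1, hd2, map_add, map_add, ← add_assoc, ← add_assoc, hy'] at he
        exact add_left_cancel he
      · change f + φ c = f + φ y.1 + φ d.1
        rw [hd1, map_add, add_assoc]
    · rintro ⟨_, ⟨f, hf, f', hf', y, hy, rfl⟩, _, ⟨d, hd, rfl⟩, rfl⟩
      have hy' : f + φ y.1 = f' + φ' y.2 := hmD f f' hy
      have hd' : φ d.1 = φ' d.2 := hd
      refine ⟨⟨f, hf, _, ⟨y.1 + d.1, rfl⟩, ?_⟩, ⟨f', hf', _, ⟨y.2 + d.2, rfl⟩, ?_⟩⟩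
      · change f + φ y.1 + φ d.1 = _
        rw [map_add, add_assoc]
      · change f + φ y.1 + φ d.1 = _
        rw [map_add, ← add_assoc, hy', hd']

theorem ratSet_of_isSemilinearSet [IsAddTorsionFree M] (w : M →+ ℕ) (s : Set M)
    (hs : IsSemilinearSet s) (hf : ∀ k, (s ∩ w ⁻¹' {k}).Finite) : RatSet w s := by
  obtain ⟨S, hS, hlin, rfl⟩ := hs
  refine RatSet.sUnion {s | Good w s} (fun A hA => Good.ratSet hA)
    (fun A hA B hB => Good.inter hA hB) S hS ?_
  intro A hA
  obtain ⟨a, t, ht, rfl⟩ := hlin A hA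
  have hsub : ∀ p ∈ AddSubmonoid.closure t, a + p ∈ ⋃₀ S := fun p hp =>
    ⟨_, hA, ⟨p, hp, rfl⟩⟩
  refine ⟨{a}, AddSubmonoid.closure t, ⟨ht.toFinset, by simp⟩, ?_, ?_⟩
  · intro p hp h0
    by_contra hne
    have hinj : Function.Injective (fun k : ℕ => a + k • p) := by
      intro i j hij
      have hij' : i • p = j • p := add_left_cancel hij
      have aux : ∀ a b : ℕ, a < b → a • p ≠ b • p := by
        intro a b hab he
        obtain ⟨d, rfl⟩ := Nat.exists_eq_add_of_lt hab
        rw [add_assoc, add_smul, left_eq_add] at he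
        exact hne ((nsmul_eq_zero_iff_right (by omega)).1 he)
      rcases lt_trichotomy i j with h | h | h
      · exact (aux _ _ h hij').elim
      · exact h
      · exact (aux _ _ h hij'.symm).elim
    refine Set.infinite_range_of_injective hinj ((hf (w a)).subset ?_)
    rintro _ ⟨k, rfl⟩
    exact ⟨hsub _ (AddSubmonoid.nsmul_mem _ hp k), by simp [h0]⟩
  · ext x
    simp [Set.mem_vadd_set, eq_comm]

end Good

section Kleene

open Pointwise

variable {M Q : Type*} [AddCommMonoid M]

/-- nonempty paths in a labelled graph with all intermediate vertices in `K` -/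
inductive KPath (E : Q → Q → Set M) (K : Set Q) : Q → Q → M → Prop
  | edge {i j : Q} {x : M} : x ∈ E i j → KPath E K i j x
  | trans {i k j : Q} {x y : M} : KPath E K i k x → k ∈ K → KPath E K k j y →
      KPath E K i j (x + y)

theorem KPath.mono {E : Q → Q → Set M} {K K' : Set Q} (h : K ⊆ K') {i j : Q} {x : M}
    (hx : KPath E K i j x) : KPath E K' i j x := by
  induction hx with
  | edge h => exact .edge h
  | trans _ hk _ ih1 ih2 => exact .trans ih1 (h hk) ih2

theorem KPath.loop {E : Q → Q → Set M} {K : Set Q} {k j : Q} {x y : M} (hk : k ∈ K)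
    (hx : x ∈ AddSubmonoid.closure {x | KPath E K k k x}) (hy : KPath E K k j y) :
    KPath E K k j (x + y) := by
  induction hx using AddSubmonoid.closure_induction generalizing y with
  | mem x hx => exact .trans hx hk hy
  | zero => simpa using hy
  | add a b _ _ ha hb =>
    rw [add_assoc]
    exact ha (hb hy)

theorem KPath.insert_iff {E : Q → Q → Set M} {K : Set Q} {k : Q} {i j : Q} {x : M} :
    KPath E (insert k K) i j x ↔ KPath E K i j x ∨ ∃ u v y, KPath E K i k u ∧
      v ∈ AddSubmonoid.closure {x | KPath E K k k x} ∧ KPath E K k j y ∧ x = u + v + y := by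
  constructor
  · intro h
    induction h with
    | edge h => exact Or.inl (.edge h)
    | @trans i l j x y _ hl _ ih1 ih2 =>
      rcases hl with rfl | hl
      · right
        rcases ih1 with h1 | ⟨u, v, z, hu, hv, hz, rfl⟩
        · rcases ih2 with h2 | ⟨u', v', z', hu', hv', hz', rfl⟩
          · exact ⟨x, 0, y, h1, zero_mem _, h2, by simp⟩
          · exact ⟨x, u' + v', z', h1,
              add_mem (AddSubmonoid.subset_closure hu') hv', hz', by abel⟩
        · rcases ih2 with h2 | ⟨u', v', z', hu', hv', hz', rfl⟩
          · exact ⟨u, v + z, y, hu, add_mem hv (AddSubmonoid.subset_closure hz), h2, by abel⟩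
          · exact ⟨u, v + z + (u' + v'), z', hu,
              add_mem (add_mem hv (AddSubmonoid.subset_closure hz))
                (add_mem (AddSubmonoid.subset_closure hu') hv'), hz', by abel⟩
      · rcases ih1 with h1 | ⟨u, v, z, hu, hv, hz, rfl⟩
        · rcases ih2 with h2 | ⟨u', v', z', hu', hv', hz', rfl⟩
          · exact Or.inl (.trans h1 hl h2)
          · exact Or.inr ⟨x + u', v', z', .trans h1 hl hu', hv', hz', by abel⟩
        · rcases ih2 with h2 | ⟨u', v', z', hu', hv', hz', rfl⟩
          · exact Or.inr ⟨u, v, z + y, hu, hv, .trans hz hl h2, by abel⟩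
          · exact Or.inr ⟨u, v + (z + u') + v', z', hu,
              add_mem (add_mem hv (AddSubmonoid.subset_closure (KPath.trans hz hl hu'))) hv', hz',
              by abel⟩
  · have hsub : K ⊆ insert k K := Set.subset_insert _ _
    rintro (h | ⟨u, v, y, hu, hv, hy, rfl⟩)
    · exact h.mono hsub
    · rw [add_assoc]
      refine .trans (hu.mono hsub) (Set.mem_insert _ _) (KPath.loop (Set.mem_insert _ _) ?_
        (hy.mono hsub))
      exact AddSubmonoid.closure_mono (fun x hx => KPath.mono hsub hx) hv

theorem KPath.isSemilinearSet {E : Q → Q → Set M} (hE : ∀ i j, IsSemilinearSet (E i j))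
    (K : Finset Q) : ∀ i j, IsSemilinearSet {x | KPath E (K : Set Q) i j x} := by
  classical
  induction K using Finset.induction_on with
  | empty =>
    intro i j
    convert hE i j using 1
    ext x
    constructor
    · intro h
      cases h with
      | edge h => exact h
      | trans _ h _ => simp at h
    · exact fun h => .edge h
  | insert k K _ ih =>
    intro i j
    have e : {x | KPath E ((insert k K : Finset Q) : Set Q) i j x} =
        {x | KPath E K i j x} ∪ ({x | KPath E K i k x} +
          (AddSubmonoid.closure {x | KPath E K k k x} : Set M) + {x | KPath E K k j x}) := by
      ext x
      rw [Finset.coe_insert, Set.mem_ofPred_eq, KPath.insert_iff]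
      simp only [Set.mem_union, Set.mem_ofPred_eq, Set.mem_add, SetLike.mem_coe]
      refine or_congr Iff.rfl ?_
      constructor
      · rintro ⟨u, v, y, hu, hv, hy, rfl⟩
        exact ⟨_, ⟨u, hu, v, hv, rfl⟩, y, hy, rfl⟩
      · rintro ⟨_, ⟨u, hu, v, hv, rfl⟩, y, hy, rfl⟩
        exact ⟨u, v, y, hu, hv, hy, rfl⟩
    rw [e]
    exact (ih i j).union (((ih i k).add (ih k k).closure).add (ih k j))

end Kleene

section Select

theorem isSemilinearSet_posInt : IsSemilinearSet {v : ℤ | 0 < v} := by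
  refine IsLinearSet.isSemilinearSet ⟨1, {1}, Set.finite_singleton _, ?_⟩
  ext v
  simp only [Set.mem_ofPred_eq, Set.mem_vadd_set, SetLike.mem_coe,
    AddSubmonoid.mem_closure_singleton, vadd_eq_add]
  constructor
  · intro h
    exact ⟨v - 1, ⟨(v - 1).toNat, by simp; omega⟩, by ring⟩
  · rintro ⟨_, ⟨k, rfl⟩, rfl⟩
    simp
    omega

variable {d : ℕ}

theorem fg_intVec : AddMonoid.FG (Fin d → ℤ) := by
  exact inferInstance

theorem isSemilinearSet_lex :
    IsSemilinearSet {p : (Fin d → ℤ) × (Fin d → ℤ) | toLex p.1 < toLex p.2} := by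
  have e : {p : (Fin d → ℤ) × (Fin d → ℤ) | toLex p.1 < toLex p.2} =
      ⋃ i : Fin d, ((⋂ j : Set.Iio i,
        ((Pi.evalAddMonoidHom (fun _ => ℤ) j.1).comp
          (AddMonoidHom.snd (Fin d → ℤ) (Fin d → ℤ) - AddMonoidHom.fst _ _)) ⁻¹' {0}) ∩
        ((Pi.evalAddMonoidHom (fun _ => ℤ) i).comp
          (AddMonoidHom.snd (Fin d → ℤ) (Fin d → ℤ) - AddMonoidHom.fst _ _)) ⁻¹' {v | 0 < v}) := by
    ext ⟨x, y⟩
    simp only [Set.mem_ofPred_eq, Set.mem_iUnion, Set.mem_inter_iff, Set.mem_iInter,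
      Set.mem_preimage, Set.mem_singleton_iff]
    change (∃ i, (∀ j, j < i → x j = y j) ∧ x i < y i) ↔ _
    refine exists_congr fun i => and_congr ?_ ?_
    · constructor
      · rintro h ⟨j, hj⟩
        simp [h j hj]
      · intro h j hj
        have := h ⟨j, hj⟩
        simp at this
        omega
    · simp
  rw [e]
  refine IsSemilinearSet.iUnion fun i => IsSemilinearSet.inter (IsSemilinearSet.iInter fun j => ?_) ?_
  · exact (IsSemilinearSet.singleton 0).preimage _
  · exact isSemilinearSet_posInt.preimage _

/-- the lexicographically first weight minimizing elements of the classes -/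
def sel (W : Set ((Fin d → ℤ) × ℕ)) (C : Set ((Fin d → ℤ) × (Fin d → ℤ))) :
    Set ((Fin d → ℤ) × ℕ) :=
  {p | p ∈ W ∧ ∀ q ∈ W, (p.1, q.1) ∈ C →
    p.2 < q.2 ∨ (p.2 = q.2 ∧ toLex p.1 ≤ toLex q.1)}

theorem isSemilinearSet_sel {W : Set ((Fin d → ℤ) × ℕ)} {C : Set ((Fin d → ℤ) × (Fin d → ℤ))}
    (hW : IsSemilinearSet W) (hC : IsSemilinearSet C) : IsSemilinearSet (sel W C) := by
  let V := Fin d → ℤ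
  let M := V × ℕ
  let f1 : M × M →+ M := AddMonoidHom.fst _ _
  let f2 : M × M →+ M := AddMonoidHom.snd _ _
  let x1 : M × M →+ V := (AddMonoidHom.fst _ _).comp f1
  let x2 : M × M →+ V := (AddMonoidHom.fst _ _).comp f2
  let k1 : M × M →+ ℕ := (AddMonoidHom.snd _ _).comp f1
  let k2 : M × M →+ ℕ := (AddMonoidHom.snd _ _).comp f2
  let df : M × M →+ ℤ := (Nat.castAddMonoidHom ℤ).comp k1 - (Nat.castAddMonoidHom ℤ).comp k2
  have e : sel W C = W \ (f1 '' (f2 ⁻¹' W ∩ (x1.prod x2) ⁻¹' C ∩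
      (df ⁻¹' {v | 0 < v} ∪
        (df ⁻¹' {0} ∩ (x2.prod x1) ⁻¹' {p : V × V | toLex p.1 < toLex p.2})))) := by
    ext p
    refine and_congr Iff.rfl ?_
    constructor
    · rintro h ⟨⟨p', q⟩, ⟨⟨hq, hc⟩, hb⟩, rfl⟩
      have hpq := h q hq hc
      rcases hb with hb | ⟨hb, hlt⟩
      · have hb' : (0 : ℤ) < (p'.2 : ℤ) - (q.2 : ℤ) := hb
        have h' : p'.2 < q.2 ∨ (p'.2 = q.2 ∧ toLex p'.1 ≤ toLex q.1) := hpq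
        omega
      · have hb' : (p'.2 : ℤ) - (q.2 : ℤ) = 0 := hb
        have hlt' : toLex q.1 < toLex p'.1 := hlt
        have h' : p'.2 < q.2 ∨ (p'.2 = q.2 ∧ toLex p'.1 ≤ toLex q.1) := hpq
        rcases h' with h' | ⟨_, h'⟩
        · omega
        · exact absurd hlt' (not_lt.2 h')
    · intro h q hq hc
      by_contra hcon
      apply h
      refine ⟨(p, q), ⟨⟨hq, hc⟩, ?_⟩, rfl⟩
      by_cases hlt : q.2 < p.2
      · left
        change (0 : ℤ) < (p.2 : ℤ) - (q.2 : ℤ)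
        omega
      · have heq : p.2 = q.2 := by
          by_contra hne
          exact hcon (Or.inl (by omega))
        right
        refine ⟨?_, ?_⟩
        · change (p.2 : ℤ) - (q.2 : ℤ) = 0
          omega
        · change toLex q.1 < toLex p.1
          by_contra hle
          exact hcon (Or.inr ⟨heq, not_lt.1 hle⟩)
  rw [e]
  refine hW.sdiff (IsSemilinearSet.image ?_ _)
  refine ((hW.preimage f2).inter (hC.preimage _)).inter ?_
  refine (isSemilinearSet_posInt.preimage df).union ?_
  exact ((IsSemilinearSet.singleton 0).preimage df).inter (isSemilinearSet_lex.preimage _)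

end Select

section Group

variable {G : Type*} [Group G] {n : ℕ} {Q : Type*} [Group Q] [Finite Q]

/-- a presentation of `G` as an extension of the finite group `Q` by `ℤ ^ n` with a section -/
structure Ext (G : Type*) [Group G] (n : ℕ) (Q : Type*) [Group Q] where
  /-- the inclusion -/
  i : (Fin n → ℤ) → G
  /-- the projection -/
  pr : G →* Q
  /-- the section -/
  t : Q → G
  i_add : ∀ x y, i (x + y) = i x * i y
  i_inj : Function.Injective i
  pr_t : ∀ q, pr (t q) = q
  ker : ∀ g, pr g = 1 ↔ ∃ x, i x = g

namespace Ext

theorem pr_i (X : Ext G n Q) (x : Fin n → ℤ) : X.pr (X.i x) = 1 := (X.ker _).2 ⟨x, rfl⟩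

theorem exists_coord (X : Ext G n Q) (g : G) : ∃ x, g = X.i x * X.t (X.pr g) := by
  obtain ⟨x, hx⟩ := (X.ker (g * (X.t (X.pr g))⁻¹)).1 (by simp [X.pr_t])
  exact ⟨x, by rw [hx]; group⟩

/-- the coordinate of `g` -/
noncomputable def co (X : Ext G n Q) (g : G) : Fin n → ℤ := (X.exists_coord g).choose

theorem co_spec (X : Ext G n Q) (g : G) : X.i (X.co g) * X.t (X.pr g) = g :=
  (X.exists_coord g).choose_spec.symm

theorem pr_eq (X : Ext G n Q) {g : G} {x : Fin n → ℤ} {q : Q} (h : g = X.i x * X.t q) :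
    X.pr g = q := by
  rw [h, map_mul, X.pr_i, X.pr_t, one_mul]

theorem co_eq (X : Ext G n Q) {g : G} {x : Fin n → ℤ} {q : Q} (h : g = X.i x * X.t q) :
    X.co g = x := by
  have h1 := X.co_spec g
  rw [X.pr_eq h] at h1
  nth_rewrite 2 [h] at h1
  exact X.i_inj (mul_right_cancel h1)

theorem i_sub (X : Ext G n Q) (x y : Fin n → ℤ) : X.i (x - y) = (X.i y)⁻¹ * X.i x := by
  rw [eq_inv_mul_iff_mul_eq, ← X.i_add]
  simp

theorem exists_act (X : Ext G n Q) (g : G) :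
    ∃ α : (Fin n → ℤ) →+ (Fin n → ℤ), ∀ x, g * X.i x = X.i (α x) * g := by
  have h : ∀ x, ∃ y, X.i y = g * X.i x * g⁻¹ := fun x => (X.ker _).1 (by simp [X.pr_i])
  choose f hf using h
  refine ⟨AddMonoidHom.mk' f fun a b => X.i_inj ?_, fun x => ?_⟩
  · rw [X.i_add, hf, hf, hf, X.i_add]; group
  · change _ = X.i (f x) * g
    rw [hf]; group

/-- words -/
def IsWord (S : Set G) (ω : G → ℕ) (g : G) (m : ℕ) : Prop :=
  ∃ l : List G, (∀ x ∈ l, x ∈ S) ∧ l.prod = g ∧ (l.map ω).sum = m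

/-- edge labels of the Schreier graph -/
def edges (X : Ext G n Q) (S : Finset G) (ω : G → ℕ) (q q' : Q) : Set ((Fin n → ℤ) × ℕ) :=
  {p | ∃ s ∈ S, X.t q * s = X.i p.1 * X.t q' ∧ p.2 = ω s}

theorem edges_finite (X : Ext G n Q) (S : Finset G) (ω : G → ℕ) (q q' : Q) :
    (X.edges S ω q q').Finite := by
  refine (S.finite_toSet.image fun s => (X.co (X.t q * s), ω s)).subset ?_
  rintro ⟨x, m⟩ ⟨s, hs, h1, h2⟩
  exact ⟨s, hs, Prod.ext (X.co_eq h1) h2.symm⟩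

theorem path_of_word (X : Ext G n Q) (S : Finset G) (ω : G → ℕ) (l : List G) :
    ∀ (q q' : Q) (x : Fin n → ℤ), (∀ x ∈ l, x ∈ S) → X.t q * l.prod = X.i x * X.t q' →
      (q = q' ∧ (x, (l.map ω).sum) = 0) ∨
        KPath (X.edges S ω) Set.univ q q' (x, (l.map ω).sum) := by
  induction l with
  | nil =>
    intro q q' x _ h
    left
    have h' : X.t q = X.i x * X.t q' := by simpa using h
    have hq : q = q' := by rw [← X.pr_eq h', X.pr_t]
    refine ⟨hq, ?_⟩
    subst hq
    have hx : x = 0 := by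
      apply X.i_inj
      have h0 : X.i 0 = 1 := by
        have := X.i_add 0 0
        simpa using this
      rw [h0]
      exact mul_right_cancel (by rw [one_mul]; exact h'.symm : X.i x * X.t q = 1 * X.t q)
    simp [hx]
  | cons s l ih =>
    intro q q' x hl h
    right
    have hs := X.co_spec (X.t q * s)
    set a := X.co (X.t q * s)
    set k := X.pr (X.t q * s)
    have hed : (a, ω s) ∈ X.edges S ω q k := ⟨s, hl s (by simp), hs.symm, rfl⟩
    have h1 : X.t k * l.prod = X.i (x - a) * X.t q' := by
      rw [X.i_sub, mul_assoc, ← h, List.prod_cons, ← mul_assoc (X.t q), ← hs]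
      group
    have e : (x, ((s :: l).map ω).sum) = (a, ω s) + (x - a, (l.map ω).sum) := by
      simp
    rw [e]
    rcases ih k q' (x - a) (fun y hy => hl y (by simp [hy])) h1 with ⟨hk, h0⟩ | hp
    · rw [h0, add_zero, ← hk]
      exact .edge hed
    · exact .trans (.edge hed) (Set.mem_univ _) hp

theorem word_of_path (X : Ext G n Q) (S : Finset G) (ω : G → ℕ) {q q' : Q}
    {p : (Fin n → ℤ) × ℕ} (h : KPath (X.edges S ω) Set.univ q q' p) :
    ∃ l : List G, (∀ x ∈ l, x ∈ S) ∧ X.t q * l.prod = X.i p.1 * X.t q' ∧ (l.map ω).sum = p.2 := by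
  induction h with
  | edge h =>
    obtain ⟨s, hs, h1, h2⟩ := h
    exact ⟨[s], by simpa using hs, by simpa using h1, by simpa using h2.symm⟩
  | @trans i k j x y _ _ _ ih1 ih2 =>
    obtain ⟨l, hl, h1, h2⟩ := ih1
    obtain ⟨l', hl', h1', h2'⟩ := ih2
    refine ⟨l ++ l', ?_, ?_, ?_⟩
    · intro z hz
      rcases List.mem_append.1 hz with hz | hz
      · exact hl z hz
      · exact hl' z hz
    · rw [List.prod_append, ← mul_assoc, h1, mul_assoc, h1', Prod.fst_add, X.i_add, mul_assoc]
    · simp [h2, h2']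

open Pointwise in
theorem isSemilinearSet_word (X : Ext G n Q) (S : Finset G) (ω : G → ℕ) (q : Q) :
    IsSemilinearSet {p : (Fin n → ℤ) × ℕ | IsWord (S : Set G) ω (X.i p.1 * X.t q) p.2} := by
  classical
  have := Fintype.ofFinite Q
  obtain ⟨x0, hx0⟩ := (X.ker (X.t 1)).1 (X.pr_t 1)
  have hK := KPath.isSemilinearSet (E := X.edges S ω)
    (fun i j => IsSemilinearSet.of_finite (X.edges_finite S ω i j)) Finset.univ 1 q
  rw [Finset.coe_univ] at hK
  have hU : IsSemilinearSet ({p | KPath (X.edges S ω) Set.univ 1 q p} ∪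
      {p : (Fin n → ℤ) × ℕ | 1 = q ∧ p = 0}) := by
    refine hK.union (IsSemilinearSet.of_finite ((Set.finite_singleton 0).subset ?_))
    rintro p ⟨_, rfl⟩
    rfl
  convert hU.vadd ((-x0, 0) : (Fin n → ℤ) × ℕ) using 1
  ext ⟨x, m⟩
  have hx : X.i (x0 + x) = X.t 1 * X.i x := by rw [X.i_add, hx0]
  constructor
  · rintro ⟨l, hl, hp, rfl⟩
    refine ⟨(x0 + x, (l.map ω).sum), ?_, by simp⟩
    rcases X.path_of_word S ω l 1 q (x0 + x) (fun y hy => hl y hy)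
      (by rw [hp, hx, mul_assoc]) with h | h
    · exact Or.inr h
    · exact Or.inl h
  · rintro ⟨⟨y, m'⟩, hy, he⟩
    have hy1 : y = x0 + x := by
      have := congrArg Prod.fst he
      simp at this
      rw [← this]; abel
    have hm : m' = m := by
      have := congrArg Prod.snd he
      simpa using this
    subst hy1 hm
    rcases hy with hy | ⟨h1, h2⟩
    · obtain ⟨l, hl, hp, hw⟩ := X.word_of_path S ω hy
      refine ⟨l, fun y hy => hl y hy, ?_, hw⟩
      simp only [hx, mul_assoc] at hp
      exact mul_left_cancel hp
    · have e1 : x0 + x = 0 := congrArg Prod.fst h2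
      have e2 : m' = 0 := congrArg Prod.snd h2
      refine ⟨[], by simp, ?_, by simp [e2]⟩
      have h0 : X.i 0 = 1 := by
        have := X.i_add 0 0
        simpa using this
      change 1 = X.i x * X.t q
      rw [← h1, ← hx0, ← X.i_add, add_comm, e1, h0]

theorem isSemilinearSet_conj (X : Ext G n Q) (q q' r : Q) :
    IsSemilinearSet {p : (Fin n → ℤ) × (Fin n → ℤ) × (Fin n → ℤ) |
      (X.i p.2.2 * X.t r) * (X.i p.1 * X.t q) = (X.i p.2.1 * X.t q') * (X.i p.2.2 * X.t r)} := by
  obtain ⟨α, hα⟩ := X.exists_act (X.t r)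
  obtain ⟨β, hβ⟩ := X.exists_act (X.t q')
  by_cases hc : ∃ c, X.t r * X.t q = X.i c * (X.t q' * X.t r)
  · obtain ⟨c, hc⟩ := hc
    let V := Fin n → ℤ
    let f : V × V × V →+ V := (AddMonoidHom.snd _ _).comp (AddMonoidHom.snd _ _) +
      α.comp (AddMonoidHom.fst _ _)
    let g : V × V × V →+ V := (AddMonoidHom.fst _ _).comp (AddMonoidHom.snd _ _) +
      β.comp ((AddMonoidHom.snd _ _).comp (AddMonoidHom.snd _ _))
    convert isSemilinearSet_setOfPred_eq c 0 f g using 1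
    ext ⟨x, y, z⟩
    have h1 : (X.i z * X.t r) * (X.i x * X.t q) =
        X.i (c + (z + α x)) * (X.t q' * X.t r) := by
      calc (X.i z * X.t r) * (X.i x * X.t q) = X.i z * (X.t r * X.i x) * X.t q := by group
        _ = X.i z * X.i (α x) * (X.t r * X.t q) := by rw [hα]; group
        _ = X.i (z + α x + c) * (X.t q' * X.t r) := by rw [hc, X.i_add, X.i_add]; group
        _ = _ := by rw [add_comm c]
    have h2 : (X.i y * X.t q') * (X.i z * X.t r) =
        X.i (0 + (y + β z)) * (X.t q' * X.t r) := by
      calc (X.i y * X.t q') * (X.i z * X.t r) = X.i y * (X.t q' * X.i z) * X.t r := by group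
        _ = _ := by rw [hβ, zero_add, X.i_add]; group
    change (X.i z * X.t r) * (X.i x * X.t q) = (X.i y * X.t q') * (X.i z * X.t r) ↔
      c + (z + α x) = 0 + (y + β z)
    rw [h1, h2, mul_left_inj]
    exact X.i_inj.eq_iff
  · convert IsSemilinearSet.empty using 1
    ext ⟨x, y, z⟩
    simp only [Set.mem_ofPred_eq, Set.mem_empty_iff_false, iff_false]
    intro h
    apply hc
    have hp := congrArg X.pr h
    simp only [map_mul, X.pr_i, X.pr_t, one_mul] at hp
    obtain ⟨c, hc⟩ := (X.ker (X.t r * X.t q * (X.t q' * X.t r)⁻¹)).1 (by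
      rw [map_mul, map_inv, map_mul, map_mul, X.pr_t, X.pr_t, X.pr_t, hp, mul_inv_cancel])
    exact ⟨c, by rw [hc]; group⟩

/-- a code of the elements by integer vectors -/
noncomputable def enc (X : Ext G n Q) (code : Q → ℤ) (g : G) : Fin (n + 1) → ℤ :=
  Fin.cons (code (X.pr g)) (X.co g)

theorem enc_inj (X : Ext G n Q) {code : Q → ℤ} (hcode : Function.Injective code) :
    Function.Injective (X.enc code) := by
  intro g h hgh
  obtain ⟨h1, h2⟩ := Fin.cons_inj.1 hgh
  rw [← X.co_spec g, ← X.co_spec h, h2, hcode h1]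

/-- the padding homomorphism -/
def pad (n : ℕ) : (Fin n → ℤ) →+ (Fin (n + 1) → ℤ) :=
  AddMonoidHom.mk' (fun x => Fin.cons 0 x) (by
    intro a b
    funext j
    refine Fin.cases ?_ (fun j => ?_) j <;> simp)

theorem enc_eq (X : Ext G n Q) (code : Q → ℤ) (x : Fin n → ℤ) (q : Q) :
    X.enc code (X.i x * X.t q) = Fin.cons (code q) 0 + pad n x := by
  rw [enc, X.pr_eq rfl, X.co_eq rfl]
  funext j
  refine Fin.cases ?_ (fun j => ?_) j <;> simp [pad]

open Pointwise in
theorem isSemilinearSet_W (X : Ext G n Q) (code : Q → ℤ) (S : Finset G) (ω : G → ℕ) :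
    IsSemilinearSet {p : (Fin (n + 1) → ℤ) × ℕ |
      ∃ g, p.1 = X.enc code g ∧ IsWord (S : Set G) ω g p.2} := by
  let J : (Fin n → ℤ) × ℕ →+ (Fin (n + 1) → ℤ) × ℕ := (pad n).prodMap (AddMonoidHom.id ℕ)
  have h := IsSemilinearSet.iUnion fun q : Q =>
    ((X.isSemilinearSet_word S ω q).image J).vadd
      ((Fin.cons (code q) 0, 0) : (Fin (n + 1) → ℤ) × ℕ)
  convert h using 1
  ext ⟨v, m⟩
  simp only [Set.mem_iUnion, Set.mem_ofPred_eq]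
  constructor
  · rintro ⟨g, hv, hg⟩
    refine ⟨X.pr g, J (X.co g, m), ⟨(X.co g, m), ?_, rfl⟩, ?_⟩
    · simpa [X.co_spec g] using hg
    · rw [← X.co_spec g, X.enc_eq] at hv
      rw [hv]
      simp [J]
  · rintro ⟨q, _, ⟨⟨x, m'⟩, hx, rfl⟩, he⟩
    have e1 : Fin.cons (code q) 0 + pad n x = v := congrArg Prod.fst he
    have e2 : 0 + m' = m := congrArg Prod.snd he
    rw [zero_add] at e2
    subst e2
    exact ⟨_, by rw [X.enc_eq, e1], hx⟩

open Pointwise in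
theorem isSemilinearSet_C (X : Ext G n Q) (code : Q → ℤ) :
    IsSemilinearSet {p : (Fin (n + 1) → ℤ) × (Fin (n + 1) → ℤ) |
      ∃ g h, p = (X.enc code g, X.enc code h) ∧ IsConj g h} := by
  let J : (Fin n → ℤ) × (Fin n → ℤ) × (Fin n → ℤ) →+ (Fin (n + 1) → ℤ) × (Fin (n + 1) → ℤ) :=
    (pad n).prodMap ((pad n).comp (AddMonoidHom.fst _ _))
  have h := IsSemilinearSet.iUnion fun q : Q × Q × Q =>
    ((X.isSemilinearSet_conj q.1 q.2.1 q.2.2).image J).vadd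
      ((Fin.cons (code q.1) 0, Fin.cons (code q.2.1) 0) :
        (Fin (n + 1) → ℤ) × (Fin (n + 1) → ℤ))
  convert h using 1
  ext ⟨v, v'⟩
  simp only [Set.mem_iUnion, Set.mem_ofPred_eq, Prod.exists]
  constructor
  · rintro ⟨g, h, hv, hgh⟩
    obtain ⟨c, hc⟩ := isConj_iff.1 hgh
    refine ⟨X.pr g, X.pr h, X.pr c, J (X.co g, X.co h, X.co c), ⟨_, ?_, rfl⟩, ?_⟩
    · simp only [Set.mem_ofPred_eq, X.co_spec]
      rw [← hc]; group
    · rw [hv]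
      nth_rewrite 3 [← X.co_spec g]
      nth_rewrite 3 [← X.co_spec h]
      rw [X.enc_eq, X.enc_eq]
      simp [J]
  · rintro ⟨q, q', r, _, ⟨⟨x, y, z⟩, hx, rfl⟩, he⟩
    have e1 : Fin.cons (code q) 0 + pad n x = v := congrArg Prod.fst he
    have e2 : Fin.cons (code q') 0 + pad n y = v' := congrArg Prod.snd he
    refine ⟨X.i x * X.t q, X.i y * X.t q', by rw [X.enc_eq, X.enc_eq, e1, e2], ?_⟩
    rw [isConj_iff]
    refine ⟨X.i z * X.t r, ?_⟩
    rw [mul_inv_eq_iff_eq_mul]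
    exact hx

end Ext

end Group

section Final

variable {G : Type*} [Group G]

theorem exists_ext (n : ℕ) (N : Subgroup G) [N.Normal]
    (e : N ≃* Multiplicative (Fin n → ℤ)) : Nonempty (Ext G n (G ⧸ N)) := by
  refine ⟨{ i := fun x => (e.symm (Multiplicative.ofAdd x) : G)
            pr := QuotientGroup.mk' N
            t := Quotient.out
            i_add := fun x y => by simp [ofAdd_add]
            i_inj := fun x y h => by
              have := e.symm.injective (Subtype.ext h)
              exact Multiplicative.ofAdd.injective this
            pr_t := fun q => QuotientGroup.out_eq' q
            ker := fun g => ?_ }⟩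
  constructor
  · intro h
    have hg : g ∈ N := (QuotientGroup.eq_one_iff g).1 h
    exact ⟨Multiplicative.toAdd (e ⟨g, hg⟩), by simp⟩
  · rintro ⟨x, rfl⟩
    exact (QuotientGroup.eq_one_iff _).2 (e.symm (Multiplicative.ofAdd x)).2

theorem finite_isWord (S : Finset G) (ω : G → ℕ) (hω : ∀ s ∈ S, 0 < ω s) (k : ℕ) :
    {g : G | Ext.IsWord (S : Set G) ω g k}.Finite := by
  have hfin : {l : List S | l.length ≤ k}.Finite := List.finite_length_le S k
  refine (hfin.image fun l => (l.map Subtype.val).prod).subset ?_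
  rintro g ⟨l, hl, rfl, hk⟩
  refine ⟨l.attach.map fun x => ⟨x.1, hl x.1 x.2⟩, ?_, ?_⟩
  · simp only [Set.mem_ofPred_eq, List.length_map, List.length_attach]
    rw [← hk]
    have : ∀ l : List G, (∀ x ∈ l, x ∈ (S : Set G)) → l.length ≤ (l.map ω).sum := by
      intro l
      induction l with
      | nil => simp
      | cons a l ih =>
        intro h
        have h1 := ih fun x hx => h x (List.mem_cons_of_mem _ hx)
        have h2 := hω a (h a List.mem_cons_self)
        simp only [List.length_cons, List.map_cons, List.sum_cons]
        omega
    exact this l hl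
  · simp [List.map_map, Function.comp_def]

theorem exists_isWord (S : Finset G) (hS : Submonoid.closure (S : Set G) = ⊤) (ω : G → ℕ)
    (g : G) : ∃ m, Ext.IsWord (S : Set G) ω g m := by
  obtain ⟨l, hl, h⟩ := Submonoid.exists_list_of_mem_closure
    (show g ∈ Submonoid.closure (S : Set G) by rw [hS]; trivial)
  exact ⟨_, l, hl, h, rfl⟩

theorem isWord_wordWeight (S : Finset G) (hS : Submonoid.closure (S : Set G) = ⊤) (ω : G → ℕ)
    (g : G) : Ext.IsWord (S : Set G) ω g (wordWeight (S : Set G) ω g) :=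
  Nat.sInf_mem (s := {m | Ext.IsWord (S : Set G) ω g m}) (exists_isWord S hS ω g)

theorem wordWeight_le (S : Set G) (ω : G → ℕ) {g : G} {m : ℕ} (h : Ext.IsWord S ω g m) :
    wordWeight S ω g ≤ m := Nat.sInf_le h

theorem exists_conjClassWeight (S : Set G) (ω : G → ℕ) (c : ConjClasses G) :
    ∃ g : G, ConjClasses.mk g = c ∧ wordWeight S ω g = conjClassWeight S ω c := by
  obtain ⟨g, hg⟩ := ConjClasses.exists_rep c
  exact Nat.sInf_mem (s := {n | ∃ g : G, ConjClasses.mk g = c ∧ wordWeight S ω g = n})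
    ⟨_, g, hg, rfl⟩

theorem conjClassWeight_le (S : Set G) (ω : G → ℕ) (g : G) :
    conjClassWeight S ω (ConjClasses.mk g) ≤ wordWeight S ω g := Nat.sInf_le ⟨g, rfl, rfl⟩

theorem card_eq {d : ℕ} (S : Finset G) (hS : Submonoid.closure (S : Set G) = ⊤)
    (ω : G → ℕ) (hω : ∀ s ∈ S, 0 < ω s) (en : G → Fin d → ℤ) (hen : Function.Injective en)
    (k : ℕ) :
    Nat.card {c : ConjClasses G // conjClassWeight (S : Set G) ω c = k} =
      {g : G | Ext.IsWord (S : Set G) ω g k ∧ ∀ h m, IsConj g h → Ext.IsWord (S : Set G) ω h m →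
        k < m ∨ (k = m ∧ toLex (en g) ≤ toLex (en h))}.ncard := by
  set B := {g : G | Ext.IsWord (S : Set G) ω g k ∧
    ∀ h m, IsConj g h → Ext.IsWord (S : Set G) ω h m →
        k < m ∨ (k = m ∧ toLex (en g) ≤ toLex (en h))} with hB
  have hinj : Set.InjOn (ConjClasses.mk : G → ConjClasses G) B := by
    intro g hg h hh hgh
    have hc := ConjClasses.mk_eq_mk_iff_isConj.1 hgh
    have h1 := hg.2 h k hc hh.1
    have h2 := hh.2 g k hc.symm hg.1
    simp only [lt_irrefl, true_and, false_or] at h1 h2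
    exact hen (toLex.injective (le_antisymm h1 h2))
  rw [← Set.ncard_image_of_injOn hinj]
  change Nat.card ({c : ConjClasses G | conjClassWeight (S : Set G) ω c = k} : Set _) = _
  rw [Nat.card_coe_set_eq]
  congr 1
  ext c
  constructor
  · intro hc
    have hc : conjClassWeight (S : Set G) ω c = k := hc
    obtain ⟨g₀, hg₀, hw⟩ := exists_conjClassWeight (S : Set G) ω c
    have hfin : {g : G | ConjClasses.mk g = c ∧ Ext.IsWord (S : Set G) ω g k}.Finite :=
      (finite_isWord S ω hω k).subset fun g hg => hg.2
    obtain ⟨g, ⟨hg, hgk⟩, hmin⟩ := Set.exists_min_image _ (fun g => toLex (en g)) hfin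
      ⟨g₀, hg₀, by rw [← hc, ← hw]; exact isWord_wordWeight S hS ω g₀⟩
    refine ⟨g, ⟨hgk, fun h m hgh hm => ?_⟩, hg⟩
    have hh : ConjClasses.mk h = c := by
      rw [← hg]; exact (ConjClasses.mk_eq_mk_iff_isConj.2 hgh).symm
    have hle : k ≤ m := by
      have := conjClassWeight_le (S : Set G) ω h
      rw [hh, hc] at this
      exact this.trans (wordWeight_le _ ω hm)
    rcases hle.lt_or_eq with hlt | rfl
    · exact Or.inl hlt
    · exact Or.inr ⟨rfl, hmin h ⟨hh, hm⟩⟩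
  · rintro ⟨g, ⟨hgk, hg⟩, rfl⟩
    refine le_antisymm ((conjClassWeight_le _ ω g).trans (wordWeight_le _ ω hgk)) ?_
    obtain ⟨h, hh, hw⟩ := exists_conjClassWeight (S : Set G) ω (ConjClasses.mk g)
    rw [← hw]
    rcases hg h _ (ConjClasses.mk_eq_mk_iff_isConj.1 hh).symm (isWord_wordWeight S hS ω h)
      with h1 | h1
    · exact h1.le
    · exact h1.1.le

theorem main {n : ℕ} {Q : Type*} [Group Q] [Finite Q] (X : Ext G n Q)
    (S : Finset G) (hS : Submonoid.closure (S : Set G) = ⊤)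
    (ω : G → ℕ) (hω : ∀ s ∈ S, 0 < ω s) :
    IsRationalSeries (PowerSeries.mk fun k =>
      (Nat.card {c : ConjClasses G // conjClassWeight (S : Set G) ω c = k} : ℤ)) := by
  obtain ⟨code, hcode⟩ : ∃ code : Q → ℤ, Function.Injective code :=
    ⟨fun q => ((Finite.equivFin Q q : ℕ) : ℤ), fun a b h => by
      have h' := Int.ofNat.inj h
      exact (Finite.equivFin Q).injective (Fin.ext h')⟩
  have hen := X.enc_inj hcode
  have hT := isSemilinearSet_sel (X.isSemilinearSet_W code S ω) (X.isSemilinearSet_C code)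
  set T := sel {p : (Fin (n + 1) → ℤ) × ℕ | ∃ g, p.1 = X.enc code g ∧
    Ext.IsWord (S : Set G) ω g p.2} {p | ∃ g h, p = (X.enc code g, X.enc code h) ∧ IsConj g h}
    with hTdef
  let w : ((Fin (n + 1) → ℤ) × ℕ) →+ ℕ := AddMonoidHom.snd _ _
  have key : ∀ k, T ∩ w ⁻¹' {k} = (fun g => (X.enc code g, k)) ''
      {g : G | Ext.IsWord (S : Set G) ω g k ∧ ∀ h m, IsConj g h → Ext.IsWord (S : Set G) ω h m →
        k < m ∨ (k = m ∧ toLex (X.enc code g) ≤ toLex (X.enc code h))} := by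
    intro k
    ext ⟨v, k'⟩
    constructor
    · rintro ⟨⟨⟨g, hv, hg⟩, hmin⟩, hk⟩
      have hk : k' = k := hk
      have hv : v = X.enc code g := hv
      subst hk hv
      refine ⟨g, ⟨hg, fun h m hgh hm => ?_⟩, rfl⟩
      exact hmin (X.enc code h, m) ⟨h, rfl, hm⟩ ⟨g, h, rfl, hgh⟩
    · rintro ⟨g, ⟨hg, hmin⟩, he⟩
      obtain ⟨rfl, rfl⟩ := Prod.mk.inj he
      refine ⟨⟨⟨g, rfl, hg⟩, ?_⟩, rfl⟩
      rintro ⟨v, m⟩ ⟨h, hv, hm⟩ ⟨g', h', he', hc⟩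
      have hv : v = X.enc code h := hv
      subst hv
      obtain ⟨e1, e2⟩ := Prod.mk.inj he'
      have e1 := hen e1
      have e2 := hen e2
      subst e1 e2
      exact hmin _ m hc hm
  have hfib : ∀ k, (T ∩ w ⁻¹' {k}).Finite := fun k => by
    rw [key]
    exact ((finite_isWord S ω hω k).subset fun g hg => hg.1).image _
  have hR := (ratSet_of_isSemilinearSet w T hT hfib).2
  convert hR using 1
  unfold cnt
  congr 1
  funext k
  rw [key, Set.ncard_image_of_injective _ fun a b h => hen (Prod.mk.inj h).1,
    card_eq S hS ω hω _ hen k]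

end Final

end VAConj

/-- The weighted conjugacy growth series of a finitely generated virtually abelian group
is rational, for any finite weighted monoid generating set. -/
theorem conjugacy_growth_series_rational {G : Type*} [Group G]
    (n : ℕ) (N : Subgroup G) (hN : N.Normal) (hNfin : N.FiniteIndex)
    (hNiso : Nonempty (N ≃* Multiplicative (Fin n → ℤ)))
    (S : Finset G) (hS : Submonoid.closure (S : Set G) = ⊤)
    (ω : G → ℕ) (hω : ∀ s ∈ S, 0 < ω s) :
    IsRationalSeries (PowerSeries.mk fun k =>
      (Nat.card {c : ConjClasses G // conjClassWeight (S : Set G) ω c = k} : ℤ)) := by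
  haveI := hN
  haveI := hNfin
  obtain ⟨e⟩ := hNiso
  obtain ⟨X⟩ := VAConj.exists_ext n N e
  exact VAConj.main X S hS ω hω
end

section
/- Let G be a finitely generated virtually abelian group and let S be a finite set generating G as a monoid with weight function ω : S → ℕ₊. Then the standard weighted growth series of G, namely ∑_{n≥0} #{g ∈ G : ω(g) = n} zⁿ, is a rational power series. -/
namespace GrowthRat

open PowerSeries

theorem rat_add {f g : PowerSeries ℤ} (hf : IsRationalSeries f) (hg : IsRationalSeries g) :
    IsRationalSeries (f + g) := by
  obtain ⟨p, q, hq, h⟩ := hf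
  obtain ⟨p', q', hq', h'⟩ := hg
  refine ⟨p * q' + p' * q, q * q', mul_ne_zero hq hq', ?_⟩
  push_cast
  rw [← h, ← h']; ring

theorem rat_mul_poly {f : PowerSeries ℤ} (r : Polynomial ℤ) (hf : IsRationalSeries f) :
    IsRationalSeries ((r : PowerSeries ℤ) * f) := by
  obtain ⟨p, q, hq, h⟩ := hf
  refine ⟨r * p, q, hq, ?_⟩
  push_cast
  rw [← h]; ring

theorem rat_of_mul {f : PowerSeries ℤ} (r : Polynomial ℤ) (hr : r ≠ 0)
    (hf : IsRationalSeries ((r : PowerSeries ℤ) * f)) : IsRationalSeries f := by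
  obtain ⟨p, q, hq, h⟩ := hf
  refine ⟨p, r * q, mul_ne_zero hr hq, ?_⟩
  push_cast
  rw [← h]; ring

theorem rat_poly (r : Polynomial ℤ) : IsRationalSeries (r : PowerSeries ℤ) :=
  ⟨r, 1, one_ne_zero, by simp⟩

theorem rat_sub {f g : PowerSeries ℤ} (hf : IsRationalSeries f) (hg : IsRationalSeries g) :
    IsRationalSeries (f - g) := by
  have := rat_add hf (rat_mul_poly (-1) hg)
  convert this using 1
  push_cast
  ring

/-- Weighted generating series of a set. -/
noncomputable def ser {B : Type*} (deg : B → ℕ) (X : Set B) : PowerSeries ℤ :=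
  PowerSeries.mk fun k => ((X ∩ deg ⁻¹' {k}).ncard : ℤ)

/-- A set with finite fibres and rational generating series. -/
def Good {B : Type*} (deg : B → ℕ) (X : Set B) : Prop :=
  (∀ k, (X ∩ deg ⁻¹' {k}).Finite) ∧ IsRationalSeries (ser deg X)

section good
variable {B C : Type*} {deg : B → ℕ} {deg' : C → ℕ}

theorem good_empty : Good deg (∅ : Set B) := by
  refine ⟨by simp, ?_⟩
  have : ser deg (∅ : Set B) = ((0 : Polynomial ℤ) : PowerSeries ℤ) := by
    ext; simp [ser]
  rw [this]; exact rat_poly 0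

theorem ser_union {X Y : Set B} (hX : ∀ k, (X ∩ deg ⁻¹' {k}).Finite)
    (hY : ∀ k, (Y ∩ deg ⁻¹' {k}).Finite) :
    ser deg (X ∪ Y) + ser deg (X ∩ Y) = ser deg X + ser deg Y := by
  ext k
  simp only [ser, map_add, coeff_mk]
  have := Set.ncard_union_add_ncard_inter _ _ (hX k) (hY k)
  rw [← Set.union_inter_distrib_right, ← Set.inter_inter_distrib_right] at this
  exact_mod_cast this

theorem good_union {X Y : Set B} (hX : Good deg X) (hY : Good deg Y) (hXY : Good deg (X ∩ Y)) :
    Good deg (X ∪ Y) := by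
  refine ⟨fun k => ?_, ?_⟩
  · rw [Set.union_inter_distrib_right]; exact (hX.1 k).union (hY.1 k)
  · have h := ser_union hX.1 hY.1
    rw [← eq_sub_iff_add_eq] at h
    rw [h]
    exact rat_sub (rat_add hX.2 hY.2) hXY.2

theorem good_sdiff {X Y : Set B} (hX : Good deg X) (hXY : Good deg (X ∩ Y)) :
    Good deg (X \ Y) := by
  have hf : ∀ k, ((X \ Y) ∩ deg ⁻¹' {k}).Finite := fun k =>
    (hX.1 k).subset (Set.inter_subset_inter_left _ Set.sdiff_subset)
  refine ⟨hf, ?_⟩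
  have h := ser_union hf hXY.1
  have h1 : X \ Y ∪ X ∩ Y = X := by rw [Set.union_comm, Set.inter_union_sdiff]
  have h2 : (X \ Y) ∩ (X ∩ Y) = ∅ := by ext; simp; tauto
  have h3 : ser deg (∅ : Set B) = 0 := by ext; simp [ser]
  rw [h1, h2, h3, add_zero, ← sub_eq_iff_eq_add] at h
  rw [← h]
  exact rat_sub hX.2 hXY.2

theorem ser_image {X : Set B} (f : B → C) (d : ℕ) (hf : Set.InjOn f X)
    (hd : ∀ x ∈ X, deg' (f x) = deg x + d) :
    ser deg' (f '' X) = ((Polynomial.X ^ d : Polynomial ℤ) : PowerSeries ℤ) * ser deg X := by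
  ext k
  push_cast
  rw [PowerSeries.coeff_X_pow_mul']
  simp only [ser, coeff_mk]
  split_ifs with h
  · have : f '' X ∩ deg' ⁻¹' {k} = f '' (X ∩ deg ⁻¹' {k - d}) := by
      ext c
      constructor
      · rintro ⟨⟨x, hx, rfl⟩, hc⟩
        refine ⟨x, ⟨hx, ?_⟩, rfl⟩
        have := hd x hx
        simp only [Set.mem_preimage, Set.mem_singleton_iff] at hc ⊢
        omega
      · rintro ⟨x, ⟨hx, hc⟩, rfl⟩
        refine ⟨⟨x, hx, rfl⟩, ?_⟩
        have := hd x hx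
        simp only [Set.mem_preimage, Set.mem_singleton_iff] at hc ⊢
        omega
    rw [this, Set.InjOn.ncard_image (hf.mono Set.inter_subset_left)]
  · have : f '' X ∩ deg' ⁻¹' {k} = ∅ := by
      ext c
      simp only [Set.mem_inter_iff, Set.mem_empty_iff_false, iff_false]
      rintro ⟨⟨x, hx, rfl⟩, hc⟩
      have := hd x hx
      simp only [Set.mem_preimage, Set.mem_singleton_iff] at hc
      omega
    rw [this]; simp

theorem good_image {X : Set B} (f : B → C) (d : ℕ) (hf : Set.InjOn f X)
    (hd : ∀ x ∈ X, deg' (f x) = deg x + d) (hX : Good deg X) : Good deg' (f '' X) := by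
  refine ⟨fun k => ?_, ?_⟩
  · refine ((hX.1 (k - d)).image f).subset ?_
    rintro c ⟨⟨x, hx, rfl⟩, hc⟩
    refine ⟨x, ⟨hx, ?_⟩, rfl⟩
    have := hd x hx
    simp only [Set.mem_preimage, Set.mem_singleton_iff] at hc ⊢
    omega
  · rw [ser_image f d hf hd]
    exact rat_mul_poly _ hX.2

theorem good_biUnion_disj {ι : Type*} (s : Finset ι) (X : ι → Set B)
    (h : ∀ i ∈ s, Good deg (X i)) (hd : ∀ i ∈ s, ∀ j ∈ s, i ≠ j → X i ∩ X j = ∅) :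
    Good deg (⋃ i ∈ s, X i) := by
  classical
  induction s using Finset.induction_on with
  | empty => simpa using good_empty
  | insert a s ha ih =>
    rw [Finset.set_biUnion_insert]
    refine good_union (h _ (by simp)) (ih (fun i hi => h i (by simp [hi]))
      (fun i hi j hj => hd i (by simp [hi]) j (by simp [hj]))) ?_
    have : X a ∩ ⋃ i ∈ s, X i = ∅ := by
      rw [Set.inter_iUnion₂]
      simp only [Set.iUnion_eq_empty]
      intro i hi
      exact hd _ (by simp) _ (by simp [hi]) (by rintro rfl; exact ha hi)
    rw [this]; exact good_empty

theorem good_biUnion {ι : Type*} (s : Finset ι) (X : ι → Set B) (P : Set B → Prop)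
    (hP : ∀ Y, P Y → Good deg Y) (hPi : ∀ Y Z, P Y → P Z → P (Y ∩ Z))
    (h : ∀ i ∈ s, P (X i)) : Good deg (⋃ i ∈ s, X i) := by
  classical
  induction s using Finset.induction_on generalizing X with
  | empty => simpa using good_empty
  | insert a s ha ih =>
    rw [Finset.set_biUnion_insert]
    refine good_union (hP _ (h _ (by simp))) (ih _ (fun i hi => h i (by simp [hi]))) ?_
    rw [Set.inter_iUnion₂]
    exact ih (fun i => X a ∩ X i) fun i hi => hPi _ _ (h _ (by simp)) (h i (by simp [hi]))

end good

section monomial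
variable {r : ℕ}

/-- weighted degree on exponent vectors -/
def wdeg (w : Fin r → ℕ) (x : Fin r → ℕ) : ℕ := ∑ i, x i * w i

theorem wdeg_add (w x y : Fin r → ℕ) : wdeg w (x + y) = wdeg w x + wdeg w y := by
  simp [wdeg, add_mul, Finset.sum_add_distrib]

theorem good_supp (w : Fin r → ℕ) (hw : ∀ i, 0 < w i) (s : Finset (Fin r)) :
    Good (wdeg w) {x : Fin r → ℕ | ∀ i ∉ s, x i = 0} := by
  classical
  have fin : ∀ (s : Finset (Fin r)) (k : ℕ),
      ({x : Fin r → ℕ | ∀ i ∉ s, x i = 0} ∩ wdeg w ⁻¹' {k}).Finite := by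
    intro s k
    refine (Set.finite_Iic (fun _ : Fin r => k)).subset ?_
    rintro x ⟨-, hx⟩ i
    simp only [Set.mem_preimage, Set.mem_singleton_iff] at hx
    have h1 : x i * w i ≤ wdeg w x :=
      Finset.single_le_sum (f := fun i => x i * w i) (fun _ _ => Nat.zero_le _) (Finset.mem_univ i)
    have := Nat.le_mul_of_pos_right (x i) (hw i)
    show x i ≤ k
    omega
  induction s using Finset.induction_on with
  | empty =>
    refine ⟨fin _, ?_⟩
    have : ser (wdeg w) {x : Fin r → ℕ | ∀ i ∉ (∅ : Finset (Fin r)), x i = 0}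
        = ((1 : Polynomial ℤ) : PowerSeries ℤ) := by
      ext k
      have h0 : {x : Fin r → ℕ | ∀ i ∉ (∅ : Finset (Fin r)), x i = 0} = {0} := by
        ext x; simp [funext_iff]
      rw [h0]
      have h1 : wdeg w 0 = 0 := by simp [wdeg]
      by_cases hk : k = 0
      · subst hk
        have : ({0} : Set (Fin r → ℕ)) ∩ wdeg w ⁻¹' {0} = {0} := by
          ext x; simp; rintro rfl; exact h1
        simp [ser, this]
      · have : ({0} : Set (Fin r → ℕ)) ∩ wdeg w ⁻¹' {k} = ∅ := by
          ext x; simp; rintro rfl; rw [h1]; exact fun h => hk h.symm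
        simp [ser, this, hk, PowerSeries.coeff_one]
    rw [this]; exact rat_poly 1
  | insert a s ha ih =>
    refine ⟨fin _, ?_⟩
    set Y := {x : Fin r → ℕ | ∀ i ∉ insert a s, x i = 0} with hY
    set Z := {x : Fin r → ℕ | ∀ i ∉ s, x i = 0} with hZ
    let f : (Fin r → ℕ) → (Fin r → ℕ) := fun x => x + Pi.single a 1
    have hu : Y = Z ∪ f '' Y := by
      ext x
      constructor
      · intro hx
        by_cases h0 : x a = 0
        · left
          intro i hi
          by_cases hia : i = a
          · rw [hia, h0]
          · exact hx i (by simp [hi, hia])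
        · right
          refine ⟨x - Pi.single a 1, ?_, ?_⟩
          · intro i hi
            simp [hx i hi]
          · ext i
            by_cases hia : i = a
            · subst hia; simp [f]; omega
            · simp [f, hia]
      · rintro (hx | ⟨y, hy, rfl⟩)
        · intro i hi
          exact hx i (fun h => hi (by simp [h]))
        · intro i hi
          have : i ≠ a := by rintro rfl; simp at hi
          simp [f, hy i hi, this]
    have hi : Z ∩ f '' Y = ∅ := by
      ext x
      simp only [Set.mem_inter_iff, Set.mem_empty_iff_false, iff_false]
      rintro ⟨hx, y, hy, rfl⟩
      have := hx a ha
      simp [f] at this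
    have hd : ∀ x ∈ Y, wdeg w (f x) = wdeg w x + w a := by
      intro x _
      simp only [f]
      rw [wdeg_add]; congr 1
      simp [wdeg, Pi.single_apply]
    have hs := ser_image (deg := wdeg w) (deg' := wdeg w) f (w a)
      (fun x _ y _ h => add_right_cancel h) hd
    have hsu := ser_union (deg := wdeg w) (X := Z) (Y := f '' Y) ih.1
      (fun k => (fin (insert a s) k).subset
        (Set.inter_subset_inter_left _ (fun x hx => by rw [← hY, hu]; exact Or.inr hx)))
    have h3 : ser (wdeg w) (∅ : Set (Fin r → ℕ)) = 0 := by ext; simp [ser]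
    rw [← hu, hi, h3, add_zero, hs] at hsu
    refine rat_of_mul (1 - Polynomial.X ^ (w a)) ?_ ?_
    · intro h
      have := congrArg (Polynomial.eval 0) h
      simp [(hw a).ne'] at this
    · have : (((1 - Polynomial.X ^ (w a) : Polynomial ℤ)) : PowerSeries ℤ) * ser (wdeg w) Y
          = ser (wdeg w) Z := by
        rw [Polynomial.coe_sub, sub_mul, Polynomial.coe_one, one_mul]
        exact sub_eq_iff_eq_add.2 hsu
      rw [this]; exact ih.2

theorem good_Ici (w : Fin r → ℕ) (hw : ∀ i, 0 < w i) (u : Fin r → ℕ) :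
    Good (wdeg w) (Set.Ici u) := by
  have h := good_supp w hw Finset.univ
  have : Set.Ici u = (fun x => x + u) '' {x : Fin r → ℕ | ∀ i ∉ Finset.univ, x i = 0} := by
    ext x
    simp only [Set.mem_Ici, Finset.mem_univ, not_true_eq_false, false_imp_iff, implies_true,
      Set.ofPred_true, Set.image_univ, Set.mem_range]
    constructor
    · intro h; exact ⟨x - u, tsub_add_cancel_of_le h⟩
    · rintro ⟨y, rfl⟩; exact le_add_self
  rw [this]
  exact good_image _ (wdeg w u) (fun x _ y _ h => add_right_cancel h)
    (fun x _ => wdeg_add _ _ _) h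

theorem exists_min_finite {W : Type*} [PartialOrder W] [WellQuasiOrderedLE W] (U : Set W) :
    ∃ F : Finset W, (∀ u ∈ F, u ∈ U) ∧ ∀ x ∈ U, ∃ u ∈ F, u ≤ x := by
  have hpwo := Set.isPWO_of_wellQuasiOrderedLE U
  have hfin : {x | Minimal (· ∈ U) x}.Finite :=
    (setOfPred_minimal_antichain _).finite_of_partiallyWellOrderedOn
      (hpwo.mono (setOfPred_minimal_subset _))
  refine ⟨hfin.toFinset, ?_, ?_⟩
  · intro u hu
    simp at hu; exact hu.1
  · intro x hx
    have : WellFoundedLT W := WellQuasiOrderedLE.to_wellFoundedLT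
    obtain ⟨m, hm, hm'⟩ := exists_minimal_le_of_wellFoundedLT (· ∈ U) x hx
    exact ⟨m, by simpa using hm', hm⟩

theorem good_upper (w : Fin r → ℕ) (hw : ∀ i, 0 < w i) (U : Set (Fin r → ℕ)) (hU : IsUpperSet U) :
    Good (wdeg w) U := by
  obtain ⟨F, hF, hF'⟩ := exists_min_finite U
  have : U = ⋃ u ∈ F, Set.Ici u := by
    ext x
    simp only [Set.mem_iUnion, Set.mem_Ici, exists_prop]
    exact ⟨hF' x, fun ⟨u, hu, h⟩ => hU h (hF u hu)⟩
  rw [this]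
  refine good_biUnion F _ (fun Y => ∃ u, Y = Set.Ici u) ?_ ?_ ?_
  · rintro _ ⟨u, rfl⟩; exact good_Ici w hw u
  · rintro _ _ ⟨u, rfl⟩ ⟨v, rfl⟩; exact ⟨u ⊔ v, Set.Ici_inter_Ici⟩
  · intro u _; exact ⟨u, rfl⟩

theorem good_lower (w : Fin r → ℕ) (hw : ∀ i, 0 < w i) (U : Set (Fin r → ℕ)) (hU : IsLowerSet U) :
    Good (wdeg w) U := by
  have h1 := good_upper w hw Set.univ isUpperSet_univ
  have h2 := good_upper w hw Uᶜ hU.compl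
  have := good_sdiff (Y := Uᶜ) h1 (by simpa using h2)
  have e : Set.univ \ Uᶜ = U := by ext; simp
  rwa [e] at this

end monomial

section linear
variable {B : Type*} [AddCommMonoid B] {deg : B →+ ℕ}

/-- A finite union of translates of one finitely generated positive submonoid. -/
def ClassC (deg : B →+ ℕ) (X : Set B) : Prop :=
  ∃ A T : Finset B, (∀ t ∈ T, 0 < deg t) ∧
    X = {b | ∃ a ∈ A, ∃ m ∈ AddSubmonoid.closure (T : Set B), b = a + m}

theorem classC_good [IsCancelAdd B] {X : Set B} (hX : ClassC deg X) : Good deg X := by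
  classical
  obtain ⟨A, T, hT, rfl⟩ := hX
  let t : Fin T.card → B := fun i => (T.equivFin.symm i : B)
  let φ : (Fin T.card → ℕ) → B := fun x => ∑ i, x i • t i
  have ht : ∀ i, 0 < deg (t i) := fun i => hT _ (T.equivFin.symm i).2
  let w : Fin T.card → ℕ := fun i => deg (t i)
  have φadd : ∀ x y, φ (x + y) = φ x + φ y := by
    intro x y; simp [φ, add_smul, Finset.sum_add_distrib]
  have φdeg : ∀ x, deg (φ x) = wdeg w x := by
    intro x; simp [φ, wdeg, w]
  have φmem : ∀ m, m ∈ AddSubmonoid.closure (T : Set B) ↔ ∃ x, φ x = m := by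
    intro m
    have hr : Set.range t = (T : Set B) := by
      ext b
      simp only [Set.mem_range, t]
      constructor
      · rintro ⟨i, rfl⟩; exact (T.equivFin.symm i).2
      · intro hb; exact ⟨T.equivFin ⟨b, hb⟩, by simp⟩
    rw [← hr]
    constructor
    · intro hm
      induction hm using AddSubmonoid.closure_induction with
      | mem x hx =>
        obtain ⟨i, rfl⟩ := hx
        exact ⟨Pi.single i 1, by simp [φ]⟩
      | zero => exact ⟨0, by simp [φ]⟩
      | add x y _ _ hx hy =>
        obtain ⟨a, rfl⟩ := hx
        obtain ⟨b, rfl⟩ := hy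
        exact ⟨a + b, φadd _ _⟩
    · rintro ⟨x, rfl⟩
      exact sum_mem fun i _ => nsmul_mem (AddSubmonoid.subset_closure (Set.mem_range_self i)) _
  let e := A.equivFin
  let a : Fin A.card → B := fun j => (e.symm j : B)
  let O := (Lex (Fin T.card → ℕ)) ×ₗ (Fin A.card)
  let mkO : (Fin T.card → ℕ) → Fin A.card → O := fun x j => toLex (toLex x, j)
  have cancel : ∀ x x' c j j', mkO (x + c) j ≤ mkO (x' + c) j' → mkO x j ≤ mkO x' j' := by
    intro x x' c j j' h
    have h := Prod.Lex.toLex_le_toLex.1 h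
    refine Prod.Lex.toLex_le_toLex.2 ?_
    simp only [toLex_add] at h ⊢
    rcases h with h | ⟨h, h'⟩
    · left; exact lt_of_add_lt_add_right h
    · right; exact ⟨add_right_cancel h, h'⟩
  let Lw : Fin A.card → Set (Fin T.card → ℕ) := fun j =>
    {x | ∀ j' x', a j' + φ x' = a j + φ x → mkO x j ≤ mkO x' j'}
  have hlow : ∀ j, IsLowerSet (Lw j) := by
    intro j x y hyx hx j' x' h
    obtain ⟨c, rfl⟩ := exists_add_of_le hyx
    apply cancel _ _ c
    apply hx
    rw [φadd, φadd, ← add_assoc, ← add_assoc, h]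
  have huniq : ∀ j j' x x', x ∈ Lw j → x' ∈ Lw j' → a j + φ x = a j' + φ x' → x = x' ∧ j = j' := by
    intro j j' x x' hx hx' h
    have := le_antisymm (hx j' x' h.symm) (hx' j x h)
    simpa [mkO] using this
  have hX : {b | ∃ a ∈ A, ∃ m ∈ AddSubmonoid.closure (T : Set B), b = a + m}
      = ⋃ j ∈ (Finset.univ : Finset (Fin A.card)), (fun x => a j + φ x) '' Lw j := by
    ext b
    simp only [Set.mem_ofPred_eq, Finset.mem_univ, Set.iUnion_true, Set.mem_iUnion, Set.mem_image]
    constructor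
    · rintro ⟨a0, ha0, m, hm, rfl⟩
      obtain ⟨x, rfl⟩ := (φmem m).1 hm
      obtain ⟨o, ho⟩ := exists_minimal_of_wellFoundedLT
        (fun o : O => a (ofLex o).2 + φ (ofLex (ofLex o).1) = a0 + φ x)
        ⟨mkO x (e ⟨a0, ha0⟩), by simp [mkO, a]⟩
      refine ⟨(ofLex o).2, ofLex (ofLex o).1, ?_, ho.1⟩
      intro j' x' h
      have : a (ofLex (mkO x' j')).2 + φ (ofLex (ofLex (mkO x' j')).1) = a0 + φ x := by
        simp only [mkO, ofLex_toLex]; rw [h]; exact ho.1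
      rcases le_total o (mkO x' j') with h1 | h1
      · exact h1
      · exact ho.2 this h1
    · rintro ⟨j, x, _, rfl⟩
      exact ⟨a j, (e.symm j).2, φ x, (φmem _).2 ⟨x, rfl⟩, rfl⟩
  rw [hX]
  apply good_biUnion_disj
  · intro j _
    refine good_image (deg := wdeg w) _ (deg (a j)) ?_ ?_ (good_lower w ht _ (hlow j))
    · intro x hx x' hx' h
      exact (huniq j j x x' hx hx' h).1
    · intro x _
      rw [map_add, φdeg, add_comm]
  · intro j _ j' _ hne
    ext b
    simp only [Set.mem_inter_iff, Set.mem_image, Set.mem_empty_iff_false, iff_false]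
    rintro ⟨⟨x, hx, rfl⟩, x', hx', h⟩
    exact hne (huniq j j' x x' hx hx' h.symm).2

theorem pos_of_mem {T : Finset B} (hT : ∀ t ∈ T, 0 < deg t) {m : B}
    (hm : m ∈ AddSubmonoid.closure (T : Set B)) : m = 0 ∨ 0 < deg m := by
  induction hm using AddSubmonoid.closure_induction with
  | mem x hx => exact Or.inr (hT x hx)
  | zero => exact Or.inl rfl
  | add x y _ _ hx hy =>
    rcases hx with rfl | hx
    · simpa using hy
    · right; rw [map_add]; omega

theorem classC_inter [IsCancelAdd B] {X Y : Set B} (hX : ClassC deg X) (hY : ClassC deg Y) :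
    ClassC deg (X ∩ Y) := by
  classical
  obtain ⟨A, T, hT, rfl⟩ := hX
  obtain ⟨A', T', hT', rfl⟩ := hY
  obtain ⟨r, φ, hφ⟩ := AddSubmonoid.fg_iff_exists_fin_addMonoidHom.1
    (⟨T, rfl⟩ : (AddSubmonoid.closure (T : Set B)).FG)
  obtain ⟨s, ψ, hψ⟩ := AddSubmonoid.fg_iff_exists_fin_addMonoidHom.1
    (⟨T', rfl⟩ : (AddSubmonoid.closure (T' : Set B)).FG)
  let f : (Fin r → ℕ) × (Fin s → ℕ) →+ B := φ.comp (AddMonoidHom.fst _ _)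
  let g : (Fin r → ℕ) × (Fin s → ℕ) →+ B := ψ.comp (AddMonoidHom.snd _ _)
  have hP : (f.eqLocusM g).FG := AddSubmonoid.fg_eqLocusM f g
  have hQ : ((f.eqLocusM g).map f).FG := hP.map f
  obtain ⟨R, hR⟩ := hQ
  have hRm : ∀ t ∈ R, t ∈ AddSubmonoid.closure (T : Set B) := by
    intro t ht
    have : t ∈ (f.eqLocusM g).map f := hR ▸ AddSubmonoid.subset_closure ht
    obtain ⟨z, _, rfl⟩ := this
    rw [← hφ]; exact ⟨z.1, rfl⟩
  have hR0 : AddSubmonoid.closure ((R.erase 0 : Finset B) : Set B) = (f.eqLocusM g).map f := by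
    rw [← hR, Finset.coe_erase]
    simp
  choose F hF hF' using fun p : B × B => exists_min_finite
    {z : (Fin r → ℕ) × (Fin s → ℕ) | p.1 + f z = p.2 + g z}
  refine ⟨(A ×ˢ A').biUnion fun p => (F p).image fun z => p.1 + f z, R.erase 0, ?_, ?_⟩
  · intro t ht
    rw [Finset.mem_erase] at ht
    exact (pos_of_mem hT (hRm t ht.2)).resolve_left ht.1
  · rw [hR0, ← hφ, ← hψ]
    ext b
    simp only [Set.mem_inter_iff, Set.mem_ofPred_eq, Finset.mem_biUnion, Finset.mem_product,
      Finset.mem_image]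
    constructor
    · rintro ⟨⟨a, ha, _, ⟨x, rfl⟩, rfl⟩, a', ha', _, ⟨y, rfl⟩, h⟩
      obtain ⟨z, hz, hzle⟩ := hF' (a, a') (x, y) h
      obtain ⟨c, hc⟩ := exists_add_of_le hzle
      have hz' := hF (a, a') z hz
      simp only [Set.mem_ofPred_eq] at hz'
      have h1 : φ x = f z + f c := by rw [← map_add, ← hc]; rfl
      have h2 : ψ y = g z + g c := by rw [← map_add, ← hc]; rfl
      refine ⟨_, ⟨(a, a'), ⟨ha, ha'⟩, z, hz, rfl⟩, f c, ⟨c, ?_, rfl⟩, ?_⟩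
      · show f c = g c
        rw [h1, h2, ← add_assoc, ← add_assoc, hz'] at h
        exact add_left_cancel h
      · rw [h1, add_assoc]
    · rintro ⟨_, ⟨⟨a, a'⟩, ⟨ha, ha'⟩, z, hz, rfl⟩, _, ⟨c, hc, rfl⟩, rfl⟩
      have hz' := hF (a, a') z hz
      simp only [Set.mem_ofPred_eq] at hz'
      have hc' : f c = g c := hc
      refine ⟨⟨a, ha, f z + f c, ⟨z.1 + c.1, by rw [map_add]; rfl⟩, add_assoc _ _ _⟩,
        a', ha', g z + g c, ⟨z.2 + c.2, by rw [map_add]; rfl⟩, ?_⟩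
      rw [hz', hc', add_assoc]

theorem classC_biUnion_good [IsCancelAdd B] {ι : Type*} (s : Finset ι) (X : ι → Set B)
    (h : ∀ i ∈ s, ClassC deg (X i)) : Good deg (⋃ i ∈ s, X i) :=
  good_biUnion s X (ClassC deg) (fun _ => classC_good) (fun _ _ => classC_inter) h

end linear

section words
variable {G : Type*} [Group G] (N : Subgroup G) [N.Normal]

/-- The set of cosets visited by the path of a word starting at a given coset. -/
def visit (x : G ⧸ N) : List G → Set (G ⧸ N)
  | [] => {x}
  | s :: l => insert x (visit (x * (s : G ⧸ N)) l)

theorem start_mem_visit (x : G ⧸ N) (l : List G) : x ∈ visit N x l := by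
  cases l <;> simp [visit]

theorem visit_append (x : G ⧸ N) (l l' : List G) :
    visit N x (l ++ l') = visit N x l ∪ visit N (x * (l.prod : G)) l' := by
  induction l generalizing x with
  | nil => simp [visit, start_mem_visit]
  | cons s l ih =>
    simp only [List.cons_append, visit, ih, List.prod_cons, QuotientGroup.mk_mul, mul_assoc,
      Set.insert_union]

theorem exists_split (x y : G ⧸ N) (l : List G) (h : y ∈ visit N x l) :
    ∃ p s, l = p ++ s ∧ x * (p.prod : G) = y := by
  induction l generalizing x with
  | nil => exact ⟨[], [], rfl, by simpa [visit] using h.symm⟩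
  | cons a l ih =>
    rcases h with h | h
    · exact ⟨[], a :: l, rfl, by simp [h]⟩
    · obtain ⟨p, s, rfl, hp⟩ := ih _ h
      exact ⟨a :: p, s, rfl, by simp [← hp, mul_assoc]⟩

theorem exists_loop [Finite (G ⧸ N)] (b : List G) (hb : b.length = Nat.card (G ⧸ N)) :
    ∃ p u s, b = p ++ u ++ s ∧ u ≠ [] ∧ ((u.prod : G) : G ⧸ N) = 1 := by
  have := Fintype.ofFinite (G ⧸ N)
  obtain ⟨i, j, hne, hij⟩ := Fintype.exists_ne_map_eq_of_card_lt
    (fun i : Fin (b.length + 1) => (((b.take i).prod : G) : G ⧸ N))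
    (by rw [Fintype.card_fin, hb, Nat.card_eq_fintype_card]; omega)
  wlog hlt : i < j generalizing i j
  · exact this j i hne.symm hij.symm (lt_of_le_of_ne (not_lt.1 hlt) hne.symm)
  have hlt' : (i : ℕ) < j := hlt
  have e : b.take j = b.take i ++ (b.take j).drop i := by
    conv_lhs => rw [← List.take_append_drop i (b.take j)]
    rw [List.take_take, min_eq_left hlt'.le]
  refine ⟨b.take i, (b.take j).drop i, b.drop j, ?_, ?_, ?_⟩
  · rw [← e, List.take_append_drop]
  · intro h
    have := congrArg List.length h
    simp only [List.length_drop, List.length_take, List.length_nil] at this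
    have := j.2
    omega
  · have h2 := congrArg (fun l : List G => ((l.prod : G) : G ⧸ N)) e
    simp only [List.prod_append, QuotientGroup.mk_mul] at h2
    have hij : (((b.take i).prod : G) : G ⧸ N) = ((b.take j).prod : G) := hij
    rw [← hij] at h2
    exact (mul_eq_left.1 h2.symm)

theorem visit_remove (p u s : List G) (hu : ((u.prod : G) : G ⧸ N) = 1) :
    visit N 1 (p ++ u ++ s) = visit N 1 (p ++ s) ∪ visit N (p.prod : G) u := by
  simp only [visit_append, List.prod_append, QuotientGroup.mk_mul, hu, mul_one, one_mul]
  ext; simp; tauto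

theorem reduce_aux [Finite (G ⧸ N)] (l : List G) :
    l.length ≤ Nat.card (G ⧸ N) * (visit N 1 l).ncard ∨
    ∃ p u s, l = p ++ u ++ s ∧ u ≠ [] ∧ u.length ≤ Nat.card (G ⧸ N) ∧
      ((u.prod : G) : G ⧸ N) = 1 ∧ visit N 1 (p ++ s) = visit N 1 l := by
  induction hn : l.length using Nat.strong_induction_on generalizing l with
  | _ n ih =>
  subst hn
  have hd : 0 < Nat.card (G ⧸ N) := Nat.card_pos
  set d := Nat.card (G ⧸ N) with hdd
  by_cases hl : l.length < d
  · left
    have : 0 < (visit N 1 l).ncard := by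
      rw [Set.ncard_pos]; exact ⟨1, start_mem_visit N 1 l⟩
    have := Nat.le_mul_of_pos_right d this
    omega
  · push Not at hl
    obtain ⟨l', b, rfl, hb⟩ : ∃ l' b, l = l' ++ b ∧ b.length = d :=
      ⟨l.take (l.length - d), l.drop (l.length - d), (List.take_append_drop _ _).symm, by
        simp; omega⟩
    by_cases hsub : visit N 1 (l' ++ b) ⊆ visit N 1 l'
    · right
      obtain ⟨p, u, s, rfl, hu, hu1⟩ := exists_loop N b hb
      refine ⟨l' ++ p, u, s, by simp, hu, ?_, hu1, ?_⟩
      · simp only [List.length_append] at hb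
        omega
      · apply subset_antisymm
        · have := visit_remove N (l' ++ p) u s hu1
          have h2 : l' ++ (p ++ u ++ s) = l' ++ p ++ u ++ s := by simp
          rw [h2, this]
          exact Set.subset_union_left
        · refine hsub.trans ?_
          rw [List.append_assoc, visit_append]
          exact Set.subset_union_left
    · have hlt : (visit N 1 l').ncard < (visit N 1 (l' ++ b)).ncard := by
        apply Set.ncard_lt_ncard _ (Set.toFinite _)
        refine ⟨?_, hsub⟩
        rw [visit_append]; exact Set.subset_union_left
      rcases ih l'.length (by simp; omega) l' rfl with h | ⟨p, u, s, rfl, hu, hul, hu1, hv⟩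
      · left
        have := Nat.mul_le_mul_left d (Nat.succ_le_of_lt hlt)
        rw [Nat.mul_succ] at this
        simp only [List.length_append]
        omega
      · right
        refine ⟨p, u, s ++ b, by simp, hu, hul, hu1, ?_⟩
        rw [← List.append_assoc, visit_append, hv, visit_append N 1 (p ++ u ++ s)]
        simp [hu1]

theorem reduce [Finite (G ⧸ N)] (l : List G)
    (hl : Nat.card (G ⧸ N) * Nat.card (G ⧸ N) < l.length) :
    ∃ p u s, l = p ++ u ++ s ∧ u ≠ [] ∧ u.length ≤ Nat.card (G ⧸ N) ∧
      ((u.prod : G) : G ⧸ N) = 1 ∧ visit N 1 (p ++ s) = visit N 1 l := by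
  rcases reduce_aux N l with h | h
  · have := Nat.mul_le_mul_left (Nat.card (G ⧸ N)) (Set.ncard_le_card (visit N 1 l))
    omega
  · exact h

theorem finite_words (S : Finset G) (d : ℕ) :
    {l : List G | (∀ x ∈ l, x ∈ S) ∧ l.length ≤ d}.Finite := by
  refine ((List.finite_length_le S d).image (List.map Subtype.val)).subset ?_
  rintro l ⟨h, hl⟩
  exact ⟨l.attach.map fun x => ⟨x.1, h _ x.2⟩, by simpa using hl, by simp⟩

theorem conj_move (hc : ∀ a ∈ N, ∀ b ∈ N, a * b = b * a) (p u s x g : G) (hu : u ∈ N)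
    (hp : (p : G ⧸ N) = x) (hg : ((p * s : G) : G ⧸ N) = g) :
    p * u * s = p * s * (g⁻¹ * x * u * x⁻¹ * g) := by
  have hn : x⁻¹ * p ∈ N := QuotientGroup.eq.1 hp.symm
  have hm : g⁻¹ * (p * s) ∈ N := QuotientGroup.eq.1 hg.symm
  have h1 : x * u * x⁻¹ = p * u * p⁻¹ := by
    have := hc _ hn u hu
    calc x * u * x⁻¹ = x * (u * (x⁻¹ * p)) * p⁻¹ := by group
      _ = x * (x⁻¹ * p * u) * p⁻¹ := by rw [this]
      _ = _ := by group
  have h2 : s⁻¹ * u * s ∈ N := by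
    have := ‹N.Normal›.conj_mem u hu s⁻¹
    simpa using this
  have h3 := hc _ hm _ h2
  calc p * u * s = p * s * (g⁻¹ * (p * s))⁻¹ * (g⁻¹ * (p * s) * (s⁻¹ * u * s)) := by group
    _ = p * s * (g⁻¹ * (p * s))⁻¹ * ((s⁻¹ * u * s) * (g⁻¹ * (p * s))) := by rw [h3]
    _ = p * s * ((g⁻¹ * (p * s))⁻¹ * ((s⁻¹ * u * s) * (g⁻¹ * (p * s)))) := by group
    _ = p * s * (g⁻¹ * (p * u * p⁻¹) * g) := ?_
    _ = _ := by rw [← h1]; group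
  have h4 := h3
  have : (g⁻¹ * (p * s))⁻¹ * ((s⁻¹ * u * s) * (g⁻¹ * (p * s))) = s⁻¹ * u * s := by
    rw [← h3]; group
  rw [this]
  have : g⁻¹ * (p * u * p⁻¹) * g
      = g⁻¹ * (p * s) * (s⁻¹ * u * s) * (g⁻¹ * (p * s))⁻¹ := by group
  rw [this, h3]; group

section main
variable {K : Type*} [AddCommGroup K] (i : Multiplicative K →* G) (S : Finset G) (ω : G → ℕ)

/-- Elements over the coset of `g` reached by words with visited set exactly `V`. -/
def reach (V : Set (G ⧸ N)) (g : G) : Set (K × ℕ) :=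
  {b | ∃ l : List G, (∀ x ∈ l, x ∈ S) ∧ visit N 1 l = V ∧
    l.prod = g * i (Multiplicative.ofAdd b.1) ∧ (l.map ω).sum ≤ b.2}

theorem reach_classC [Finite (G ⧸ N)] (hi : Function.Injective i) (hr : i.range = N)
    (hω : ∀ s ∈ S, 0 < ω s) (V : Set (G ⧸ N)) (g : G) :
    ClassC (AddMonoidHom.snd K ℕ) (reach N i S ω V g) := by
  classical
  have hc : ∀ a ∈ N, ∀ b ∈ N, a * b = b * a := by
    rw [← hr]
    rintro _ ⟨a, rfl⟩ _ ⟨b, rfl⟩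
    rw [← map_mul, mul_comm, map_mul]
  have hiN : ∀ k, i k ∈ N := fun k => hr ▸ ⟨k, rfl⟩
  set d := Nat.card (G ⧸ N) with hd
  let j : K × ℕ → G × ℕ := fun b => (i (Multiplicative.ofAdd b.1), b.2)
  have hj : Function.Injective j := by
    rintro ⟨a, n⟩ ⟨b, m⟩ h
    simp only [j, Prod.mk.injEq] at h
    rw [h.2, Multiplicative.ofAdd.injective (hi h.1)]
  let val : (G ⧸ N) × List G → G × ℕ := fun z =>
    (g⁻¹ * z.1.out * z.2.prod * z.1.out⁻¹ * g, (z.2.map ω).sum)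
  let T1 : Set (K × ℕ) := {b | ∃ z : (G ⧸ N) × List G, ((∀ x ∈ z.2, x ∈ S) ∧ z.2.length ≤ d) ∧
    z.2 ≠ [] ∧ ((z.2.prod : G) : G ⧸ N) = 1 ∧ visit N z.1 z.2 ⊆ V ∧ j b = val z}
  have hT1 : T1.Finite := by
    refine Set.Finite.of_finite_image
      (((Set.finite_univ.prod (finite_words S d)).image val).subset ?_) hj.injOn
    rintro _ ⟨b, ⟨z, hz, -, -, -, h⟩, rfl⟩
    exact ⟨z, ⟨trivial, hz⟩, h.symm⟩
  let A1 : Set (K × ℕ) := {b | ∃ l : List G, ((∀ x ∈ l, x ∈ S) ∧ l.length ≤ d * d) ∧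
    visit N 1 l = V ∧ l.prod = g * i (Multiplicative.ofAdd b.1) ∧ (l.map ω).sum = b.2}
  have hA1 : A1.Finite := by
    refine Set.Finite.of_finite_image
      (((finite_words S (d * d)).image fun l => (g⁻¹ * l.prod, (l.map ω).sum)).subset ?_) hj.injOn
    rintro _ ⟨b, ⟨l, hl, -, h, h'⟩, rfl⟩
    exact ⟨l, hl, by simp [j, h, h']⟩
  have hsum : ∀ l : List G, (∀ x ∈ l, x ∈ S) → l ≠ [] → 0 < (l.map ω).sum := by
    intro l hl hne
    cases l with
    | nil => exact absurd rfl hne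
    | cons a l =>
      have := hω a (hl a (by simp))
      simp only [List.map_cons, List.sum_cons]; omega
  refine ⟨hA1.toFinset, insert (0, 1) hT1.toFinset, ?_, ?_⟩
  · intro t ht
    simp only [Finset.mem_insert, Set.Finite.mem_toFinset] at ht
    rcases ht with rfl | ⟨z, ⟨hz, -⟩, hne, -, -, h⟩
    · simp
    · have : t.2 = (z.2.map ω).sum := congrArg Prod.snd h
      rw [AddMonoidHom.coe_snd, this]
      exact hsum _ hz hne
  · simp only [Finset.coe_insert, Set.Finite.coe_toFinset, Set.Finite.mem_toFinset]
    apply subset_antisymm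
    · have key : ∀ (n : ℕ) (l : List G), l.length = n → (∀ x ∈ l, x ∈ S) → visit N 1 l = V →
          ∀ k : K, l.prod = g * i (Multiplicative.ofAdd k) →
          ∃ a ∈ A1, ∃ m ∈ AddSubmonoid.closure (insert (0, 1) T1),
            ((k, (l.map ω).sum) : K × ℕ) = a + m := by
        intro n
        induction n using Nat.strong_induction_on with
        | _ n ih =>
        intro l hn hl hV k hk
        subst hn
        by_cases hlen : l.length ≤ d * d
        · exact ⟨(k, (l.map ω).sum), ⟨l, ⟨hl, hlen⟩, hV, hk, rfl⟩, 0, zero_mem _, by simp⟩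
        · push Not at hlen
          obtain ⟨p, u, s, rfl, hu, hul, hu1, hv⟩ := reduce N l hlen
          have huN : u.prod ∈ N := (QuotientGroup.eq_one_iff _).1 hu1
          have hq : ((p.prod * s.prod : G) : G ⧸ N) = g := by
            have h1 : ((g * i (Multiplicative.ofAdd k) : G) : G ⧸ N) = g := by
              rw [QuotientGroup.mk_mul, (QuotientGroup.eq_one_iff _).2 (hiN _), mul_one]
            rw [← h1, ← hk]
            simp [hu1]
          have hmv := conj_move N hc p.prod u.prod s.prod ((p.prod : G ⧸ N).out) g huN
            (by simp) hq
          obtain ⟨kt, hkt⟩ : ∃ kt, i kt =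
              g⁻¹ * (p.prod : G ⧸ N).out * u.prod * ((p.prod : G ⧸ N).out)⁻¹ * g := by
            have h1 : g⁻¹ * (p.prod : G ⧸ N).out * u.prod * ((p.prod : G ⧸ N).out)⁻¹ * g ∈ N := by
              have := ‹N.Normal›.conj_mem u.prod huN (g⁻¹ * (p.prod : G ⧸ N).out)
              simpa [mul_assoc] using this
            exact MonoidHom.mem_range.1 ((SetLike.ext_iff.1 hr _).2 h1)
          have hps : (p ++ s).prod = g * i (Multiplicative.ofAdd (k - kt.toAdd)) := by
            have e1 : p.prod * u.prod * s.prod = g * i (Multiplicative.ofAdd k) := by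
              rw [← hk]; simp [mul_assoc]
            rw [hmv, ← hkt] at e1
            rw [List.prod_append, ofAdd_sub, ofAdd_toAdd, map_div, div_eq_mul_inv, ← mul_assoc,
              ← e1, mul_inv_cancel_right]
          obtain ⟨a, ha, m, hm, e⟩ := ih (p ++ s).length (by
              have := List.length_pos_iff.2 hu
              simp only [List.length_append]; omega) (p ++ s) rfl
            (fun x hx => hl x (by simp at hx ⊢; tauto)) (hv.trans hV) _ hps
          refine ⟨a, ha, m + (kt.toAdd, (u.map ω).sum), add_mem hm
            (AddSubmonoid.subset_closure (Or.inr ⟨((p.prod : G ⧸ N), u),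
              ⟨fun x hx => hl x (by simp [hx]), hul⟩, hu, hu1, ?_, ?_⟩)), ?_⟩
          · rw [← hV, visit_remove N p u s hu1]; exact Set.subset_union_right
          · simp only [j, val, ofAdd_toAdd, hkt]
          · rw [← add_assoc, ← e]
            simp only [List.map_append, List.sum_append, Prod.mk_add_mk, sub_add_cancel,
              Prod.mk.injEq, true_and]
            omega
      rintro ⟨k, n⟩ ⟨l, hl, hV, hk, hn⟩
      obtain ⟨a, ha, m, hm, e⟩ := key _ l rfl hl hV k hk
      have h01 : ((0, 1) : K × ℕ) ∈ AddSubmonoid.closure (insert (0, 1) T1) :=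
        AddSubmonoid.subset_closure (Set.mem_insert _ _)
      refine ⟨a, ha, m + (n - (l.map ω).sum) • ((0, 1) : K × ℕ),
        add_mem hm (nsmul_mem h01 _), ?_⟩
      rw [← add_assoc, ← e]
      simp only at hn
      ext
      · simp
      · simp; omega
    · rintro _ ⟨a, ha, m, hm, rfl⟩
      induction hm using AddSubmonoid.closure_induction_right with
      | zero =>
        obtain ⟨l, ⟨hl, -⟩, h1, h2, h3⟩ := ha
        rw [add_zero]
        exact ⟨l, hl, h1, h2, h3.le⟩
      | add_right m hm t ht ih =>
        rw [← add_assoc]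
        generalize a + m = b at ih
        obtain ⟨l, hl, hV, hk, hn⟩ := ih
        rcases ht with rfl | ⟨⟨ξ, u⟩, ⟨hz, -⟩, -, hu1, hsub, h⟩
        · refine ⟨l, hl, hV, by simpa using hk, ?_⟩
          simp only [Prod.snd_add]; omega
        · simp only at hz hu1 hsub
          have hξ : ξ ∈ visit N 1 l := by rw [hV]; exact hsub (start_mem_visit N _ _)
          obtain ⟨p, s, rfl, hp⟩ := exists_split N _ _ _ hξ
          rw [one_mul] at hp
          have huN : u.prod ∈ N := (QuotientGroup.eq_one_iff _).1 hu1
          have hq : ((p.prod * s.prod : G) : G ⧸ N) = g := by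
            rw [← List.prod_append, hk, QuotientGroup.mk_mul,
              (QuotientGroup.eq_one_iff _).2 (hiN _), mul_one]
          have hmv := conj_move N hc p.prod u.prod s.prod ξ.out g huN (by simp [hp]) hq
          simp only [j, val, Prod.mk.injEq] at h
          refine ⟨p ++ u ++ s, ?_, ?_, ?_, ?_⟩
          · intro x hx
            simp only [List.mem_append] at hx hl
            rcases hx with (hx | hx) | hx
            · exact hl x (Or.inl hx)
            · exact hz x hx
            · exact hl x (Or.inr hx)
          · rw [visit_remove N p u s hu1, hV, hp]
            exact Set.union_eq_left.2 hsub
          · rw [List.prod_append, List.prod_append, hmv, ← List.prod_append, hk, Prod.fst_add,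
              ofAdd_add, map_mul, h.1, mul_assoc]
          · simp only [List.map_append, List.sum_append, Prod.snd_add] at hn ⊢
            omega

end main
end words

theorem wordWeight_le_iff {G : Type*} [Group G] (S : Finset G)
    (hS : Submonoid.closure (S : Set G) = ⊤) (ω : G → ℕ) (g : G) (n : ℕ) :
    wordWeight (S : Set G) ω g ≤ n ↔
      ∃ l : List G, (∀ x ∈ l, x ∈ S) ∧ l.prod = g ∧ (l.map ω).sum ≤ n := by
  constructor
  · intro h
    have hne : {n | ∃ l : List G, (∀ x ∈ l, x ∈ (S : Set G)) ∧ l.prod = g ∧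
        (l.map ω).sum = n}.Nonempty := by
      obtain ⟨l, hl, hp⟩ := Submonoid.exists_list_of_mem_closure
        (show g ∈ Submonoid.closure (S : Set G) by rw [hS]; trivial)
      exact ⟨_, l, hl, hp, rfl⟩
    obtain ⟨l, hl, hp, hw⟩ := Nat.sInf_mem hne
    exact ⟨l, hl, hp, hw.trans_le h⟩
  · rintro ⟨l, hl, hp, hw⟩
    refine le_trans (Nat.sInf_le ?_) hw
    exact ⟨l, hl, hp, rfl⟩

theorem good_ball {G : Type*} [Group G] {K : Type*} [AddCommGroup K] (N : Subgroup G) [N.Normal]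
    [Finite (G ⧸ N)] (i : Multiplicative K →* G) (hi : Function.Injective i) (hr : i.range = N)
    (S : Finset G) (hS : Submonoid.closure (S : Set G) = ⊤)
    (ω : G → ℕ) (hω : ∀ s ∈ S, 0 < ω s) :
    Good (Prod.snd : G × ℕ → ℕ) {b | wordWeight (S : Set G) ω b.1 ≤ b.2} := by
  classical
  have := Fintype.ofFinite (G ⧸ N)
  have := Fintype.ofFinite (Set (G ⧸ N))
  have hq : ∀ g : G, Good (Prod.snd : K × ℕ → ℕ)
      {b | wordWeight (S : Set G) ω (g * i (Multiplicative.ofAdd b.1)) ≤ b.2} := by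
    intro g
    have h := classC_biUnion_good (deg := AddMonoidHom.snd K ℕ)
      (Finset.univ : Finset (Set (G ⧸ N))) (fun V => reach N i S ω V g)
      (fun V _ => reach_classC N i S ω hi hr hω V g)
    have e : {b : K × ℕ | wordWeight (S : Set G) ω (g * i (Multiplicative.ofAdd b.1)) ≤ b.2}
        = ⋃ V ∈ (Finset.univ : Finset (Set (G ⧸ N))), reach N i S ω V g := by
      ext b
      simp only [Set.mem_ofPred_eq, wordWeight_le_iff S hS, Finset.mem_univ, Set.iUnion_true,
        Set.mem_iUnion, reach]
      constructor
      · rintro ⟨l, hl, hp, hw⟩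
        exact ⟨_, l, hl, rfl, hp, hw⟩
      · rintro ⟨_, l, hl, -, hp, hw⟩
        exact ⟨l, hl, hp, hw⟩
    rw [e]
    exact h
  have hiN : ∀ k, i k ∈ N := fun k => hr ▸ ⟨k, rfl⟩
  let f : G ⧸ N → K × ℕ → G × ℕ := fun q b => (q.out * i (Multiplicative.ofAdd b.1), b.2)
  have hfq : ∀ q b, (((f q b).1 : G) : G ⧸ N) = q := by
    intro q b
    simp only [f]
    rw [QuotientGroup.mk_mul, (QuotientGroup.eq_one_iff _).2 (hiN _), mul_one]
    simp
  have e : {b : G × ℕ | wordWeight (S : Set G) ω b.1 ≤ b.2} =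
      ⋃ q ∈ (Finset.univ : Finset (G ⧸ N)), f q ''
        {b | wordWeight (S : Set G) ω (q.out * i (Multiplicative.ofAdd b.1)) ≤ b.2} := by
    ext ⟨g, n⟩
    simp only [Set.mem_ofPred_eq, Finset.mem_univ, Set.iUnion_true, Set.mem_iUnion, Set.mem_image]
    constructor
    · intro h
      have h1 : (g : G ⧸ N).out⁻¹ * g ∈ i.range := by
        rw [hr]; exact QuotientGroup.eq.1 (by simp)
      obtain ⟨k, hk⟩ := MonoidHom.mem_range.1 h1
      have h2 : (g : G ⧸ N).out * i k = g := by rw [hk]; simp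
      refine ⟨g, (k.toAdd, n), ?_, ?_⟩
      · simpa [h2] using h
      · simp [f, h2]
    · rintro ⟨q, ⟨k, m⟩, h, hf⟩
      simp only [f, Prod.mk.injEq] at hf
      rw [← hf.1, ← hf.2]
      exact h
  rw [e]
  apply good_biUnion_disj
  · intro q _
    refine good_image (deg := (Prod.snd : K × ℕ → ℕ)) _ 0 ?_ (fun _ _ => rfl) (hq _)
    rintro ⟨a, n⟩ - ⟨b, m⟩ - h
    simp only [f, Prod.mk.injEq, mul_right_inj] at h
    rw [h.2, Multiplicative.ofAdd.injective (hi h.1)]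
  · intro q _ q' _ hne
    ext x
    simp only [Set.mem_inter_iff, Set.mem_image, Set.mem_empty_iff_false, iff_false]
    rintro ⟨⟨b, -, rfl⟩, b', -, h⟩
    apply hne
    rw [← hfq q b, ← h, hfq]

theorem good_sphere {G : Type*} [Group G] {K : Type*} [AddCommGroup K] (N : Subgroup G) [N.Normal]
    [Finite (G ⧸ N)] (i : Multiplicative K →* G) (hi : Function.Injective i) (hr : i.range = N)
    (S : Finset G) (hS : Submonoid.closure (S : Set G) = ⊤)
    (ω : G → ℕ) (hω : ∀ s ∈ S, 0 < ω s) :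
    Good (Prod.snd : G × ℕ → ℕ) {b | wordWeight (S : Set G) ω b.1 = b.2} := by
  have h := good_ball N i hi hr S hS ω hω
  let f : G × ℕ → G × ℕ := fun b => (b.1, b.2 + 1)
  have h2 : Good (Prod.snd : G × ℕ → ℕ) (f '' {b | wordWeight (S : Set G) ω b.1 ≤ b.2}) := by
    refine good_image (deg := (Prod.snd : G × ℕ → ℕ)) f 1 ?_ (fun _ _ => rfl) h
    rintro ⟨a, n⟩ - ⟨b, m⟩ - h
    simpa [f] using h
  have e : f '' {b | wordWeight (S : Set G) ω b.1 ≤ b.2}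
      = {b | wordWeight (S : Set G) ω b.1 < b.2} := by
    ext ⟨g, n⟩
    simp only [Set.mem_image, Set.mem_ofPred_eq, f, Prod.mk.injEq]
    constructor
    · rintro ⟨⟨g', m⟩, h, rfl, rfl⟩
      simp only at h ⊢
      omega
    · intro h
      exact ⟨(g, n - 1), by simp only; omega, rfl, by simp only; omega⟩
  rw [e] at h2
  have e2 : {b : G × ℕ | wordWeight (S : Set G) ω b.1 ≤ b.2} ∩
      {b | wordWeight (S : Set G) ω b.1 < b.2} = {b | wordWeight (S : Set G) ω b.1 < b.2} := by
    ext b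
    simp only [Set.mem_inter_iff, Set.mem_ofPred_eq]
    omega
  have h3 := good_sdiff (Y := {b | wordWeight (S : Set G) ω b.1 < b.2}) h (by rw [e2]; exact h2)
  convert h3 using 1
  ext b
  simp only [Set.mem_ofPred_eq, Set.mem_sdiff]
  omega

end GrowthRat

/-- The standard weighted growth series of a finitely generated virtually abelian group
is rational, for any finite weighted monoid generating set. -/
theorem standard_growth_series_rational {G : Type*} [Group G]
    (n : ℕ) (N : Subgroup G) (hN : N.Normal) (hNfin : N.FiniteIndex)
    (hNiso : Nonempty (N ≃* Multiplicative (Fin n → ℤ)))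
    (S : Finset G) (hS : Submonoid.closure (S : Set G) = ⊤)
    (ω : G → ℕ) (hω : ∀ s ∈ S, 0 < ω s) :
    IsRationalSeries (PowerSeries.mk fun k =>
      (Nat.card {g : G // wordWeight (S : Set G) ω g = k} : ℤ)) := by
  obtain ⟨e⟩ := hNiso
  have hfin : Finite (G ⧸ N) := Subgroup.finite_quotient_of_finiteIndex
  have h := GrowthRat.good_sphere N (N.subtype.comp e.symm.toMonoidHom)
    (N.subtype_injective.comp e.symm.injective) (by
      ext g
      simp only [MonoidHom.mem_range, MonoidHom.comp_apply]
      constructor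
      · rintro ⟨k, rfl⟩; exact (e.symm k).2
      · intro hg; exact ⟨e ⟨g, hg⟩, by simp⟩) S hS ω hω
  convert h.2 using 1
  ext k
  simp only [GrowthRat.ser, PowerSeries.coeff_mk]
  congr 1
  have e : {b : G × ℕ | wordWeight (S : Set G) ω b.1 = b.2} ∩ Prod.snd ⁻¹' {k}
      = (fun g => (g, k)) '' {g : G | wordWeight (S : Set G) ω g = k} := by
    ext ⟨g, m⟩
    simp only [Set.mem_inter_iff, Set.mem_ofPred_eq, Set.mem_preimage, Set.mem_singleton_iff,
      Set.mem_image, Prod.mk.injEq]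
    constructor
    · rintro ⟨h, rfl⟩; exact ⟨g, h, rfl, rfl⟩
    · rintro ⟨g', h, rfl, rfl⟩; exact ⟨h, rfl⟩
  rw [e, Set.ncard_image_of_injective _ (fun a b h => (Prod.mk.inj h).1)]
  rfl
end
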